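/- arXiv:0901.3978 — 10 statements merged into one kernel-verified Lean document; each statement's English description precedes it below -/
import Mathlib

section
/- Let d ≥ 1 be an integer, M ∈ (0,∞], and let m be a mobility on [0,M); if M < ∞ set m(M) := lim_{r↑M} m(r). Define the action density φ : ℝ × ℝ^d → [0,∞] by φ(ρ,w) = |w|²/m(ρ) if ρ ∈ [0,M] ∩ ℝ (with the conventions 0/0 := 0 and a/0 := +∞ for a > 0), and φ(ρ,w) = +∞ if ρ < 0 or ρ > M. Then φ is jointly convex and lower semicontinuous on ℝ × ℝ^d. -/
open Set ENNReal

/-! In `ℝ≥0∞`, with `0 / 0 = 0`, the function `(x, s) ↦ x² / s` is nondecreasing in `x`,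
nonincreasing in `s`, homogeneous of degree one, and subadditive (Sedrakyan's inequality); hence
`f² / g` is convex for convex `f` and concave `g`. It is also jointly lower semicontinuous, because
multiplication on `ℝ≥0∞` is discontinuous only at points where the product is `0`. Both properties
survive extension by `∞` outside a closed convex set. -/

open Filter
open scoped NNReal Topology

section Arithmetic

theorem ennreal_add_sq_div_add_le (x y s t : ℝ≥0∞) :
    (x + y) ^ 2 / (s + t) ≤ x ^ 2 / s + y ^ 2 / t := by
  rcases eq_or_ne (s + t) ∞ with hst | hst
  · simp [hst]
  obtain ⟨hs, ht⟩ := ENNReal.add_ne_top.mp hst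
  rcases eq_or_ne (x ^ 2 / s + y ^ 2 / t) ∞ with hXY | hXY
  · simp [hXY]
  obtain ⟨hX, hY⟩ := ENNReal.add_ne_top.mp hXY
  have hx : x ^ 2 ≤ x ^ 2 / s * s := (ENNReal.div_le_iff_le_mul (.inr hX) (.inl hs)).mp le_rfl
  have hy : y ^ 2 ≤ y ^ 2 / t * t := (ENNReal.div_le_iff_le_mul (.inr hY) (.inl ht)).mp le_rfl
  have hx_top : x ≠ ∞ := by
    rintro rfl; simp [ENNReal.top_div, hs] at hX
  have hy_top : y ≠ ∞ := by
    rintro rfl; simp [ENNReal.top_div, ht] at hY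
  refine ENNReal.div_le_of_le_mul ?_
  generalize x ^ 2 / s = X at *
  generalize y ^ 2 / t = Y at *
  lift X to ℝ≥0 using hX
  lift Y to ℝ≥0 using hY
  lift x to ℝ≥0 using hx_top
  lift y to ℝ≥0 using hy_top
  lift s to ℝ≥0 using hs
  lift t to ℝ≥0 using ht
  norm_cast at hx hy ⊢
  simpa using Finset.univ.sum_sq_le_sum_mul_sum_of_sq_le_mul (r := ![x, y]) (f := ![X, Y])
    (g := ![s, t]) (by simp) (by simp) (by simp [Fin.forall_fin_two, hx, hy])

theorem ennreal_smul_sq_div_smul (a : ℝ≥0) (x s : ℝ≥0∞) :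
    (a • x) ^ 2 / (a • s) = a • (x ^ 2 / s) := by
  rcases eq_or_ne a 0 with rfl | ha
  · simp
  have ha' : (a : ℝ≥0∞) ≠ 0 := by exact_mod_cast ha
  simp only [ENNReal.smul_def, smul_eq_mul]
  rw [mul_pow, sq, mul_assoc, ENNReal.mul_div_mul_left _ _ ha' ENNReal.coe_ne_top, mul_div_assoc]

theorem ennreal_exists_lt_mul_of_lt_mul {a b c : ℝ≥0∞} (h : c < a * b) :
    ∃ a' < a, ∃ b' < b, c < a' * b' := by
  have ha : a ≠ 0 := left_ne_zero_of_mul h.ne_bot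
  have hb : b ≠ 0 := right_ne_zero_of_mul h.ne_bot
  have : (𝓝[<] a).NeBot := nhdsLT_neBot_of_exists_lt ⟨0, pos_iff_ne_zero.mpr ha⟩
  have : (𝓝[<] b).NeBot := nhdsLT_neBot_of_exists_lt ⟨0, pos_iff_ne_zero.mpr hb⟩
  have h_mul : Tendsto (fun p : ℝ≥0∞ × ℝ≥0∞ ↦ p.1 * p.2) (𝓝[<] a ×ˢ 𝓝[<] b) (𝓝 (a * b)) :=
    (ENNReal.tendsto_mul (.inl ha) (.inl hb)).mono_left
      ((Filter.prod_mono nhdsWithin_le_nhds nhdsWithin_le_nhds).trans_eq nhds_prod_eq.symm)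
  obtain ⟨⟨a', b'⟩, hc, ha', hb'⟩ := ((h_mul.eventually_const_lt h).and
    (prod_mem_prod self_mem_nhdsWithin self_mem_nhdsWithin)).exists
  exact ⟨a', ha', b', hb', hc⟩

end Arithmetic

section Convexity

variable {V : Type*} [AddCommMonoid V] {s : Set V}

theorem convexOn_sq_div [SMul ℝ≥0 V] {f g : V → ℝ≥0∞}
    (hf : ConvexOn ℝ≥0 s f) (hg : ConcaveOn ℝ≥0 s g) :
    ConvexOn ℝ≥0 s fun x ↦ f x ^ 2 / g x := by
  refine ⟨hf.1, fun x hx y hy a b ha hb hab ↦ ?_⟩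
  calc f (a • x + b • y) ^ 2 / g (a • x + b • y)
      ≤ (a • f x + b • f y) ^ 2 / (a • g x + b • g y) := by
        gcongr
        · exact hf.2 hx hy ha hb hab
        · exact hg.2 hx hy ha hb hab
    _ ≤ (a • f x) ^ 2 / (a • g x) + (b • f y) ^ 2 / (b • g y) := ennreal_add_sq_div_add_le ..
    _ = a • (f x ^ 2 / g x) + b • (f y ^ 2 / g y) := by simp only [ennreal_smul_sq_div_smul]

theorem convexOn_univ_piecewise_top [Module ℝ≥0 V] [∀ x, Decidable (x ∈ s)] {f : V → ℝ≥0∞}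
    (hf : ConvexOn ℝ≥0 s f) : ConvexOn ℝ≥0 univ (s.piecewise f ⊤) := by
  refine convexOn_iff_forall_pos.mpr ⟨convex_univ, fun x _ y _ a b ha hb hab ↦ ?_⟩
  by_cases hx : x ∈ s
  · by_cases hy : y ∈ s
    · simpa only [piecewise_eq_of_mem, hx, hy, hf.1 hx hy ha.le hb.le hab]
        using hf.2 hx hy ha.le hb.le hab
    · simp [hy, ENNReal.smul_top, hb.ne']
  · simp [hx, ENNReal.smul_top, ha.ne']

theorem concaveOn_ennreal_ofReal [Module ℝ V] {g : V → ℝ} (hg : ConcaveOn ℝ s g)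
    (hg₀ : ∀ x ∈ s, 0 ≤ g x) : ConcaveOn ℝ≥0 s fun x ↦ ENNReal.ofReal (g x) := by
  refine ⟨fun x hx y hy a b _ _ hab ↦ hg.1 hx hy a.2 b.2 (by exact_mod_cast hab),
    fun x hx y hy a b _ _ hab ↦ ?_⟩
  have hle : a • g x + b • g y ≤ g (a • x + b • y) :=
    hg.2 hx hy a.2 b.2 (by exact_mod_cast hab)
  have hgx : 0 ≤ a • g x := smul_nonneg zero_le (hg₀ x hx)
  have hgy : 0 ≤ b • g y := smul_nonneg zero_le (hg₀ y hy)
  calc a • ENNReal.ofReal (g x) + b • ENNReal.ofReal (g y)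
      = ENNReal.ofReal (a • g x + b • g y) := by
        rw [ENNReal.ofReal_add hgx hgy]
        simp only [NNReal.smul_def, smul_eq_mul, ENNReal.smul_def,
          ENNReal.ofReal_mul NNReal.zero_le_coe, ENNReal.ofReal_coe_nnreal]
    _ ≤ ENNReal.ofReal (g (a • x + b • y)) := ENNReal.ofReal_le_ofReal hle

theorem convexOn_univ_enorm {E : Type*} [SeminormedAddCommGroup E] [NormedSpace ℝ E] :
    ConvexOn ℝ≥0 univ fun x : E ↦ ‖x‖ₑ := by
  refine ⟨convex_univ, fun x _ y _ a b _ _ _ ↦ ?_⟩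
  calc ‖a • x + b • y‖ₑ ≤ ‖a • x‖ₑ + ‖b • y‖ₑ := by
        simpa only [enorm_eq_nnnorm, ← ENNReal.coe_add, ENNReal.coe_le_coe] using
          nnnorm_add_le (a • x) (b • y)
    _ = a • ‖x‖ₑ + b • ‖y‖ₑ := by
        simp only [NNReal.smul_def, enorm_smul, NNReal.enorm_eq, ENNReal.smul_def, smul_eq_mul]

end Convexity

section Semicontinuity

variable {X : Type*} [TopologicalSpace X] {s : Set X}

theorem lowerSemicontinuousOn_ennreal_mul {f g : X → ℝ≥0∞} (hf : LowerSemicontinuousOn f s)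
    (hg : LowerSemicontinuousOn g s) : LowerSemicontinuousOn (fun x ↦ f x * g x) s := by
  intro x hx c hc
  obtain ⟨a, ha, b, hb, hab⟩ := ennreal_exists_lt_mul_of_lt_mul hc
  filter_upwards [hf x hx a ha, hg x hx b hb] with z hza hzb
  exact hab.trans_le (mul_le_mul' hza.le hzb.le)

theorem lowerSemicontinuousOn_sq_div {f g : X → ℝ≥0∞} (hf : LowerSemicontinuousOn f s)
    (hg : UpperSemicontinuousOn g s) : LowerSemicontinuousOn (fun x ↦ f x ^ 2 / g x) s := by
  have hf_sq : LowerSemicontinuousOn (fun x ↦ f x ^ 2) s :=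
    (ENNReal.continuous_pow 2).comp_lowerSemicontinuousOn hf (pow_left_mono 2)
  have hg_inv : LowerSemicontinuousOn (fun x ↦ (g x)⁻¹) s :=
    continuous_inv.comp_upperSemicontinuousOn_antitone hg ENNReal.inv_strictAnti.antitone
  simpa only [div_eq_mul_inv] using lowerSemicontinuousOn_ennreal_mul hf_sq hg_inv

theorem lowerSemicontinuous_piecewise_top {β : Type*} [Preorder β] [OrderTop β]
    [∀ x, Decidable (x ∈ s)] {f : X → β} (hs : IsClosed s) (hf : LowerSemicontinuousOn f s) :
    LowerSemicontinuous (s.piecewise f ⊤) := by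
  intro x c hc
  by_cases hx : x ∈ s
  · rw [piecewise_eq_of_mem _ _ _ hx] at hc
    filter_upwards [eventually_nhdsWithin_iff.mp (hf x hx c hc)] with z hz
    by_cases hzs : z ∈ s
    · simpa only [piecewise_eq_of_mem, hzs] using hz hzs
    · simpa only [piecewise_eq_of_notMem _ _ _ hzs, Pi.top_apply] using hc.trans_le le_top
  · filter_upwards [hs.isOpen_compl.mem_nhds hx] with z hz
    rw [piecewise_eq_of_notMem _ _ _ hx] at hc
    rwa [piecewise_eq_of_notMem _ _ _ hz]

end Semicontinuity

section ActionDensity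

variable {V E : Type*} [SeminormedAddCommGroup E] {K : Set V} {m : V → ℝ}

open Classical in
/-- The action density `(ρ, w) ↦ ‖w‖² / m ρ` of a mobility `m` with domain `K`, extended by `∞` to
`ρ ∉ K`. The conventions `0 / 0 = 0` and `a / 0 = ∞` for `a > 0` are those of division in `ℝ≥0∞`. -/
noncomputable def actionDensity (K : Set V) (m : V → ℝ) : V × E → ℝ≥0∞ :=
  (Prod.fst ⁻¹' K).piecewise (fun p ↦ ‖p.2‖ₑ ^ 2 / ENNReal.ofReal (m p.1)) ⊤

theorem convexOn_actionDensity [AddCommMonoid V] [Module ℝ V] [NormedSpace ℝ E]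
    (hm : ConcaveOn ℝ K m) (hm₀ : ∀ x ∈ K, 0 ≤ m x) :
    ConvexOn ℝ≥0 univ (actionDensity K m : V × E → ℝ≥0∞) := by
  classical
  have h_den : ConcaveOn ℝ≥0 (Prod.fst ⁻¹' K) fun p : V × E ↦ ENNReal.ofReal (m p.1) :=
    (concaveOn_ennreal_ofReal hm hm₀).comp_linearMap (LinearMap.fst ℝ≥0 V E)
  have h_num : ConvexOn ℝ≥0 (Prod.fst ⁻¹' K) fun p : V × E ↦ ‖p.2‖ₑ :=
    (convexOn_univ_enorm.comp_linearMap (LinearMap.snd ℝ≥0 V E)).subset (subset_univ _) h_den.1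
  exact convexOn_univ_piecewise_top (convexOn_sq_div h_num h_den)

theorem lowerSemicontinuous_actionDensity [TopologicalSpace V] (hK : IsClosed K)
    (hm : UpperSemicontinuousOn m K) :
    LowerSemicontinuous (actionDensity K m : V × E → ℝ≥0∞) := by
  classical
  have h_num : LowerSemicontinuousOn (fun p : V × E ↦ ‖p.2‖ₑ) (Prod.fst ⁻¹' K) :=
    continuous_snd.enorm.continuousOn.lowerSemicontinuousOn
  have h_den : UpperSemicontinuousOn (fun p : V × E ↦ ENNReal.ofReal (m p.1)) (Prod.fst ⁻¹' K) :=
    ENNReal.continuous_ofReal.comp_upperSemicontinuousOn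
      (hm.comp continuous_fst.continuousOn (mapsTo_preimage _ _)) ENNReal.ofReal_mono
  exact lowerSemicontinuous_piecewise_top (hK.preimage continuous_fst)
    (lowerSemicontinuousOn_sq_div h_num h_den)

theorem stmt_0_general [AddCommMonoid V] [Module ℝ V] [TopologicalSpace V] [NormedSpace ℝ E]
    (hK : IsClosed K) (hm_usc : UpperSemicontinuousOn m K) (hm_conc : ConcaveOn ℝ K m)
    (hm_nonneg : ∀ x ∈ K, 0 ≤ m x) :
    (∀ p q : V × E, ∀ a b : ℝ, 0 ≤ a → 0 ≤ b → a + b = 1 →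
      actionDensity K m (a • p + b • q) ≤
        ENNReal.ofReal a * actionDensity K m p + ENNReal.ofReal b * actionDensity K m q) ∧
    LowerSemicontinuous (actionDensity K m : V × E → ℝ≥0∞) := by
  refine ⟨fun p q a b ha hb hab ↦ ?_, lowerSemicontinuous_actionDensity hK hm_usc⟩
  lift a to ℝ≥0 using ha
  lift b to ℝ≥0 using hb
  rw [ENNReal.ofReal_coe_nnreal, ENNReal.ofReal_coe_nnreal]
  exact (convexOn_actionDensity hm_conc hm_nonneg).2 (mem_univ p) (mem_univ q) zero_le zero_le
    (by exact_mod_cast hab)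

end ActionDensity

/-- The action density `φ(ρ,w) = |w|²/m(ρ)` (with the conventions `0/0 = 0`,
`a/0 = ∞` for `a > 0`, these being the conventions of `ENNReal` division)
associated with a concave mobility `m` on `[0,M)` (extended continuously to `M`
when `M < ∞`) is jointly convex and lower semicontinuous on `ℝ × ℝᵈ`. -/
theorem stmt_0 (d : ℕ) (hd : 1 ≤ d) (M : ℝ≥0∞) (hM : 0 < M) (m : ℝ → ℝ)
    (hm_cont : ContinuousOn m {r : ℝ | 0 ≤ r ∧ ENNReal.ofReal r ≤ M})
    (hm_conc : ConcaveOn ℝ {r : ℝ | 0 ≤ r ∧ ENNReal.ofReal r ≤ M} m)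
    (hm_nonneg : ∀ r : ℝ, 0 ≤ r → ENNReal.ofReal r ≤ M → 0 ≤ m r)
    (hm_pos : ∀ r : ℝ, 0 < r → ENNReal.ofReal r < M → 0 < m r)
    (φ : ℝ × EuclideanSpace ℝ (Fin d) → ℝ≥0∞)
    (hφ : ∀ p : ℝ × EuclideanSpace ℝ (Fin d),
      φ p = if 0 ≤ p.1 ∧ ENNReal.ofReal p.1 ≤ M
        then ENNReal.ofReal (‖p.2‖ ^ 2) / ENNReal.ofReal (m p.1) else ∞) :
    (∀ p q : ℝ × EuclideanSpace ℝ (Fin d), ∀ a b : ℝ, 0 ≤ a → 0 ≤ b → a + b = 1 →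
      φ (a • p + b • q) ≤ ENNReal.ofReal a * φ p + ENNReal.ofReal b * φ q) ∧
    LowerSemicontinuous φ := by
  have hφ_eq : φ = actionDensity {r : ℝ | 0 ≤ r ∧ ENNReal.ofReal r ≤ M} m := by
    funext p
    simp [hφ, actionDensity, piecewise, ENNReal.ofReal_pow]
  have h_closed : IsClosed {r : ℝ | 0 ≤ r ∧ ENNReal.ofReal r ≤ M} :=
    isClosed_Ici.inter (isClosed_Iic.preimage ENNReal.continuous_ofReal)
  rw [hφ_eq]
  exact stmt_0_general h_closed hm_cont.upperSemicontinuousOn hm_conc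
    fun r hr ↦ hm_nonneg r hr.1 hr.2
end

section
/- Let d ≥ 1 be an integer and α ∈ (1/2, 1]. Consider the logarithmic entropy density U(r) = r·log r, so that U''(r) = 1/r, the mobility m(r) = r^α, the associated pressure derivative P'(r) = m(r)·U''(r) = r^{α−1}, and H(r) := ∫₀^r P'(z)·m'(z) dz = (α/(2α−1))·r^{2α−1}. Then the generalized McCann inequality P'(r)·m(r) ≥ (1 − 1/d)·H(r) holds for every r > 0 if and only if α ≥ d/(d+1). -/
open Set

/-!
Both `P' m` and `H` are multiples of the same power `r ^ (2α - 1)`, so the inequality does not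
depend on `r` and amounts to comparing coefficients: `(1 - 1/d) α / (2α - 1) ≤ 1`. Since
`2α - 1 > 0`, clearing denominators turns this into `(d - 1) α ≤ d (2α - 1)`, i.e.
`d ≤ α (d + 1)`.
-/

theorem one_sub_one_div_mul_div_le_one_iff {K : Type*} [Field K] [LinearOrder K]
    [IsStrictOrderedRing K] {d α : K} (hd : 0 < d) (hα : 1 / 2 < α) :
    (1 - 1 / d) * (α / (2 * α - 1)) ≤ 1 ↔ d / (d + 1) ≤ α := by
  have hden : 0 < 2 * α - 1 := by linarith
  calc (1 - 1 / d) * (α / (2 * α - 1)) ≤ 1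
      ↔ (d - 1) * α / (d * (2 * α - 1)) ≤ 1 := by
        rw [one_sub_div hd.ne', div_mul_div_comm]
    _ ↔ (d - 1) * α ≤ d * (2 * α - 1) := div_le_one (mul_pos hd hden)
    _ ↔ d ≤ α * (d + 1) := by constructor <;> intro h <;> linarith
    _ ↔ d / (d + 1) ≤ α := (div_le_iff₀ (by positivity)).symm

theorem forall_pos_mul_rpow_le_rpow_iff {c p : ℝ} :
    (∀ r : ℝ, 0 < r → c * r ^ p ≤ r ^ p) ↔ c ≤ 1 where
  mp h := by simpa only [Real.one_rpow, mul_one] using h 1 one_pos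
  mpr hc r hr := mul_le_of_le_one_left (Real.rpow_nonneg hr.le p) hc

theorem rpow_sub_one_mul_rpow_self {r : ℝ} (hr : 0 < r) (α : ℝ) :
    r ^ (α - 1) * r ^ α = r ^ (2 * α - 1) := by
  rw [← Real.rpow_add hr, sub_add_eq_add_sub, ← two_mul]

theorem stmt_3_general {d α : ℝ} (hd : 0 < d) (hα : 1 / 2 < α) :
    (∀ r : ℝ, 0 < r →
      r ^ (α - 1) * r ^ α ≥ (1 - 1 / d) * ((α / (2 * α - 1)) * r ^ (2 * α - 1))) ↔
    α ≥ d / (d + 1) := by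
  rw [ge_iff_le, ← one_sub_one_div_mul_div_le_one_iff hd hα,
    ← forall_pos_mul_rpow_le_rpow_iff (p := 2 * α - 1)]
  refine forall₂_congr fun r hr ↦ ?_
  rw [rpow_sub_one_mul_rpow_self hr, ← mul_assoc, ge_iff_le]

/-- For the logarithmic entropy `U(r) = r log r` (so `U''(r) = 1/r`) and the
mobility `m(r) = r^α` with `α ∈ (1/2,1]`, so that `P'(r) = m(r)·U''(r) = r^(α−1)`
and `H(r) = ∫₀^r P'·m' = (α/(2α−1)) r^(2α−1)`, the generalized McCann inequality
`P'(r)·m(r) ≥ (1 − 1/d)·H(r)` holds for every `r > 0` iff `α ≥ d/(d+1)`. -/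
theorem stmt_3 (d : ℕ) (hd : 1 ≤ d) (α : ℝ) (hα0 : 1 / 2 < α) (hα1 : α ≤ 1) :
    (∀ r : ℝ, 0 < r →
      r ^ (α - 1) * r ^ α ≥
        (1 - 1 / (d : ℝ)) * ((α / (2 * α - 1)) * r ^ (2 * α - 1))) ↔
    α ≥ (d : ℝ) / ((d : ℝ) + 1) :=
  stmt_3_general (Nat.cast_pos.mpr hd) hα0
end

section
/- Let d ≥ 1 be an integer and let m : [0,∞) → [0,∞) be a continuous, concave, nondecreasing function strictly positive on (0,∞), with almost-everywhere derivative m' ≥ 0. Let P : [0,∞) → ℝ be nondecreasing, locally absolutely continuous with P(0) = 0 and P'·m' locally integrable, and assume P'(r)·m(r) ≥ (1 − 1/d)·H(r) ≥ 0 for almost every r > 0, where H(r) := ∫₀^r P'(z)·m'(z) dz. Then for every a ≥ 0: (i) setting m_a(r) := m(r + a) and H_a(r) := ∫₀^r P'(z)·m'(z + a) dz, one has P'(r)·m_a(r) ≥ (1 − 1/d)·H_a(r) ≥ 0 for almost every r > 0; (ii) setting P_a(r) := P(max(r − a, 0)) and H̃(r) := ∫₀^r P_a'(z)·m'(z) dz,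 one has P_a'(r)·m(r) ≥ (1 − 1/d)·H̃(r) ≥ 0 for almost every r > 0. -/
open Set MeasureTheory

/-!
Shifting the mobility by `a` changes the two sides of the McCann condition in opposite directions:
monotonicity of `m` raises `P' m`, while concavity makes `m'` nonincreasing and so lowers `∫ P' m'`;
the sign `P' ≥ 0` needed for both is read off the condition itself. The claim on the delayed
pressure is the claim on the shifted mobility, evaluated at `r - a` instead of `r`.
-/

theorem ae_restrict_Ioi_comp_add {q : ℝ → Prop} {b : ℝ} (a : ℝ)
    (hq : ∀ᵐ r ∂volume.restrict (Ioi b), q r) :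
    ∀ᵐ r ∂volume.restrict (Ioi (b - a)), q (r + a) := by
  rw [← preimage_add_const_Ioi]
  exact ((measurePreserving_add_right volume a).restrict_preimage
    measurableSet_Ioi).quasiMeasurePreserving.ae hq

theorem setIntegral_Ioc_comp_sub {E : Type*} [NormedAddCommGroup E] [NormedSpace ℝ E]
    (f : ℝ → E) (a b c : ℝ) :
    ∫ z in Ioc (b + a) c, f (z - a) = ∫ z in Ioc b (c - a), f z := by
  simpa using (measurePreserving_sub_right volume a).setIntegral_preimage_emb
    (MeasurableEquiv.subRight a).measurableEmbedding f (Ioc b (c - a))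

theorem hasDerivAt_le_of_concaveOn {s : Set ℝ} {f : ℝ → ℝ} {x y f'x f'y : ℝ}
    (hf : ConcaveOn ℝ s f) (hx : x ∈ s) (hy : y ∈ s) (hxy : x ≤ y)
    (hfx : HasDerivAt f f'x x) (hfy : HasDerivAt f f'y y) : f'y ≤ f'x := by
  rcases hxy.eq_or_lt with rfl | hlt
  · exact (hfy.unique hfx).le
  · exact (hf.le_slope_of_hasDerivAt hx hy hlt hfy).trans
      (hf.slope_le_of_hasDerivAt hx hy hlt hfx)

/-- The density of the pressure `r ↦ P (max (r - a) 0)`, where `P` has density `p`. -/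
noncomputable def delay (a : ℝ) (p : ℝ → ℝ) (z : ℝ) : ℝ :=
  if a < z then p (z - a) else 0

theorem setIntegral_delay_mul {a : ℝ} (ha : 0 ≤ a) (p f : ℝ → ℝ) (r : ℝ) :
    ∫ z in Ioc 0 r, delay a p z * f z = ∫ z in Ioc 0 (r - a), p z * f (z + a) := by
  have h_indicator : (fun z => delay a p z * f z) =
      (Ioi a).indicator fun z => p (z - a) * f z := by
    ext z
    simp [delay, indicator_apply]
  rw [h_indicator, setIntegral_indicator measurableSet_Ioi, Ioc_inter_Ioi, max_eq_right ha]
  simpa using setIntegral_Ioc_comp_sub (fun z => p z * f (z + a)) a 0 r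

/-- The generalized McCann condition `P' m ≥ c H ≥ 0`, `H r = ∫₀^r P' m'`, with `H₀ = 0`; in
dimension `d` the constant is `c = 1 - 1 / d`. The pressure `P` enters through its density `p`,
and `m'` stands for the almost-everywhere derivative of the mobility `m`. -/
def GeneralizedMcCann (c : ℝ) (m m' p : ℝ → ℝ) : Prop :=
  ∀ᵐ r ∂volume.restrict (Ioi (0 : ℝ)),
    c * ∫ z in Ioc 0 r, p z * m' z ≤ p r * m r ∧ 0 ≤ ∫ z in Ioc 0 r, p z * m' z

theorem ae_deriv_shift_mem_Icc {m m' : ℝ → ℝ} {a : ℝ}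
    (hm_conc : ConcaveOn ℝ (Ioi 0) m) (hm_mono : MonotoneOn m (Ioi 0))
    (hm_deriv : ∀ᵐ r ∂volume.restrict (Ioi (0 : ℝ)), HasDerivAt m (m' r) r) (ha : 0 ≤ a) :
    ∀ᵐ r ∂volume.restrict (Ioi (0 : ℝ)), m' (r + a) ∈ Icc 0 (m' r) := by
  have hm_deriv_shift : ∀ᵐ r ∂volume.restrict (Ioi (0 : ℝ)), HasDerivAt m (m' (r + a)) (r + a) :=
    ae_restrict_of_ae_restrict_of_subset (Ioi_subset_Ioi (by linarith))
      (ae_restrict_Ioi_comp_add a hm_deriv)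
  filter_upwards [hm_deriv, hm_deriv_shift, ae_restrict_mem measurableSet_Ioi]
    with r hr hra (hr_pos : 0 < r)
  have hra_pos : r + a ∈ Ioi 0 := add_pos_of_pos_of_nonneg hr_pos ha
  have h_accPt : AccPt (r + a) (Filter.principal (Ioi 0)) :=
    uniqueDiffWithinAt_iff_accPt.mp (isOpen_Ioi.uniqueDiffWithinAt hra_pos)
  exact ⟨hra.hasDerivWithinAt.nonneg_of_monotoneOn h_accPt hm_mono,
    hasDerivAt_le_of_concaveOn hm_conc hr_pos hra_pos (by linarith) hr hra⟩

namespace GeneralizedMcCann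

variable {c a : ℝ} {m m' p : ℝ → ℝ}

theorem ae_density_nonneg (h : GeneralizedMcCann c m m' p) (hc : 0 ≤ c)
    (hm_pos : ∀ r, 0 < r → 0 < m r) : ∀ᵐ r ∂volume.restrict (Ioi (0 : ℝ)), 0 ≤ p r := by
  filter_upwards [h, ae_restrict_mem measurableSet_Ioi] with r ⟨h_le, h_nonneg⟩ hr
  exact nonneg_of_mul_nonneg_left ((mul_nonneg hc h_nonneg).trans h_le) (hm_pos r hr)

theorem mono_mobility {n n' : ℝ → ℝ} (h : GeneralizedMcCann c m m' p) (hc : 0 ≤ c)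
    (hm_pos : ∀ r, 0 < r → 0 < m r) (hmn : ∀ r, 0 < r → m r ≤ n r)
    (hn' : ∀ᵐ r ∂volume.restrict (Ioi (0 : ℝ)), n' r ∈ Icc 0 (m' r))
    (hpm' : ∀ r : ℝ, 0 < r → IntegrableOn (fun z => p z * m' z) (Ioc 0 r)) :
    GeneralizedMcCann c n n' p := by
  have hp := h.ae_density_nonneg hc hm_pos
  have h_nonneg : ∀ᵐ z ∂volume.restrict (Ioi (0 : ℝ)), 0 ≤ p z * n' z := by
    filter_upwards [hp, hn'] with z hpz hn'z using mul_nonneg hpz hn'z.1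
  have h_le : ∀ᵐ z ∂volume.restrict (Ioi (0 : ℝ)), p z * n' z ≤ p z * m' z := by
    filter_upwards [hp, hn'] with z hpz hn'z using mul_le_mul_of_nonneg_left hn'z.2 hpz
  filter_upwards [h, hp, ae_restrict_mem measurableSet_Ioi] with r ⟨h_gmc, _⟩ hpr hr
  have h_nonneg_Ioc : ∀ᵐ z ∂volume.restrict (Ioc 0 r), 0 ≤ p z * n' z :=
    ae_restrict_of_ae_restrict_of_subset Ioc_subset_Ioi_self h_nonneg
  have h_integral_le : ∫ z in Ioc 0 r, p z * n' z ≤ ∫ z in Ioc 0 r, p z * m' z :=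
    integral_mono_of_nonneg h_nonneg_Ioc (hpm' r hr)
      (ae_restrict_of_ae_restrict_of_subset Ioc_subset_Ioi_self h_le)
  refine ⟨?_, integral_nonneg_of_ae h_nonneg_Ioc⟩
  calc c * ∫ z in Ioc 0 r, p z * n' z
      ≤ c * ∫ z in Ioc 0 r, p z * m' z := mul_le_mul_of_nonneg_left h_integral_le hc
    _ ≤ p r * m r := h_gmc
    _ ≤ p r * n r := mul_le_mul_of_nonneg_left (hmn r hr) hpr

theorem delay_density
    (h : GeneralizedMcCann c (fun r => m (r + a)) (fun r => m' (r + a)) p) (ha : 0 ≤ a) :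
    GeneralizedMcCann c m m' (delay a p) := by
  have h_shift := ae_restrict_Ioi_comp_add (-a) h
  rw [zero_sub, neg_neg, ae_restrict_iff' measurableSet_Ioi] at h_shift
  filter_upwards [ae_restrict_of_ae h_shift] with r hr
  rw [setIntegral_delay_mul ha]
  rcases le_or_gt r a with har | har
  · simp [delay, har.not_gt]
  · simpa [delay, har, ← sub_eq_add_neg] using hr har

end GeneralizedMcCann

theorem stmt_6_general {c a : ℝ} {m m' p : ℝ → ℝ} (hc : 0 ≤ c)
    (hm_conc : ConcaveOn ℝ (Ioi 0) m) (hm_mono : MonotoneOn m (Ioi 0))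
    (hm_pos : ∀ r, 0 < r → 0 < m r)
    (hm_deriv : ∀ᵐ r ∂volume.restrict (Ioi (0 : ℝ)), HasDerivAt m (m' r) r)
    (hpm' : ∀ R : ℝ, 0 < R → IntegrableOn (fun z => p z * m' z) (Ioc 0 R))
    (h : GeneralizedMcCann c m m' p) (ha : 0 ≤ a) :
    GeneralizedMcCann c (fun r => m (r + a)) (fun r => m' (r + a)) p ∧
      GeneralizedMcCann c m m' (delay a p) := by
  have hm_shift (r : ℝ) (hr : 0 < r) : m r ≤ m (r + a) :=
    hm_mono hr (add_pos_of_pos_of_nonneg hr ha) (le_add_of_nonneg_right ha)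
  have h_shift : GeneralizedMcCann c (fun r => m (r + a)) (fun r => m' (r + a)) p :=
    h.mono_mobility hc hm_pos hm_shift
      (ae_deriv_shift_mem_Icc hm_conc hm_mono hm_deriv ha) hpm'
  exact ⟨h_shift, h_shift.delay_density ha⟩

/-- Shift property of the generalized McCann condition, case `M = +∞`: if a
pressure `P` (encoded through a density `p` with `P r = ∫₀^r p`) satisfies
`P'(r)·m(r) ≥ (1 − 1/d)·H(r) ≥ 0` a.e. on `(0,∞)` with `H(r) = ∫₀^r P'·m'`,
then for every `a ≥ 0`:
(i) the shifted mobility `mₐ(r) = m(r+a)` works, i.e.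
`P'(r)·m(r+a) ≥ (1 − 1/d)·∫₀^r P'(z)·m'(z+a) dz ≥ 0` a.e.; and
(ii) the shifted pressure `Pₐ(r) = P(max(r−a,0))`, whose a.e. derivative is
`Pₐ'(z) = p(z−a)` for `z > a` and `0` for `z < a`, satisfies
`Pₐ'(r)·m(r) ≥ (1 − 1/d)·∫₀^r Pₐ'(z)·m'(z) dz ≥ 0` a.e. -/
theorem stmt_6 (d : ℕ) (hd : 1 ≤ d) (m m' : ℝ → ℝ)
    (hm_cont : ContinuousOn m (Ici 0)) (hm_conc : ConcaveOn ℝ (Ici 0) m)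
    (hm_mono : MonotoneOn m (Ici 0)) (hm_pos : ∀ r : ℝ, 0 < r → 0 < m r)
    (hm_deriv : ∀ᵐ r ∂(volume.restrict (Ioi (0:ℝ))),
      HasDerivAt m (m' r) r ∧ 0 ≤ m' r)
    (P p : ℝ → ℝ) (hPmono : MonotoneOn P (Ici 0))
    (hP : ∀ r : ℝ, 0 ≤ r → P r = ∫ z in Ioc 0 r, p z)
    (hp_loc : ∀ R : ℝ, 0 < R → IntegrableOn p (Ioc 0 R))
    (hpm'_loc : ∀ R : ℝ, 0 < R → IntegrableOn (fun z => p z * m' z) (Ioc 0 R))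
    (hgmc : ∀ᵐ r ∂(volume.restrict (Ioi (0:ℝ))),
      p r * m r ≥ (1 - 1 / (d : ℝ)) * ∫ z in Ioc 0 r, p z * m' z ∧
      0 ≤ ∫ z in Ioc 0 r, p z * m' z)
    (a : ℝ) (ha : 0 ≤ a) :
    (∀ᵐ r ∂(volume.restrict (Ioi (0:ℝ))),
      p r * m (r + a) ≥ (1 - 1 / (d : ℝ)) * ∫ z in Ioc 0 r, p z * m' (z + a) ∧
      0 ≤ ∫ z in Ioc 0 r, p z * m' (z + a)) ∧
    (∀ᵐ r ∂(volume.restrict (Ioi (0:ℝ))),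
      (if a < r then p (r - a) else 0) * m r ≥
        (1 - 1 / (d : ℝ)) *
          ∫ z in Ioc 0 r, (if a < z then p (z - a) else 0) * m' z ∧
      0 ≤ ∫ z in Ioc 0 r, (if a < z then p (z - a) else 0) * m' z) := by
  exact stmt_6_general (by simpa using Nat.cast_inv_le_one d)
    (hm_conc.subset Ioi_subset_Ici_self (convex_Ioi 0)) (hm_mono.mono Ioi_subset_Ici_self) hm_pos
    (hm_deriv.mono fun _ hr => hr.1) hpm'_loc hgmc ha
end

section
/- Let r₀ > 0, let m : [0, r₀] → [0,∞) be concave, continuous and strictly positive on (0, r₀], and let q : (0, r₀) → [0,∞) be integrable. Then sup over r ∈ (0, r₀) of ∫₀^{r₀} (max(z − r, 0)/m(z))·q(z) dz is finite; moreover the function F(r) := ∫₀^{r₀} (max(z − r, 0)/m(z))·q(z) dz is nonincreasing and bounded on (0, r₀) and has a finite limit as r ↓ 0. Consequently, any function U on (0, r₀] of the form U(r) = U(r₀) + U'(r₀)(r − r₀) + F(r) is bounded near 0 and lim_{r↓0} U(r) exists and is finite. -/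
open Set MeasureTheory Filter

/-!
A nonnegative concave `m` on `(0, r₀]` lies above the chord from the origin to `(r₀, m r₀)`, so
`z / m z ≤ r₀ / m r₀`. Hence `|(z - r)⁺ / m z * q z| ≤ (r₀ / m r₀) * |q z|` uniformly in `r ≥ 0`,
and dominated convergence makes the remainder integral continuous in `r` on `[0, ∞)`, including at
the endpoint `r = 0`. Boundedness near `0` is then compactness of `[0, r₀]`, and monotonicity is
inherited from that of `r ↦ (z - r)⁺`.
-/

section Chord

variable {a b x : ℝ} {f : ℝ → ℝ}

theorem chord_le_of_concaveOn_Ioc (hf : ConcaveOn ℝ (Ioc a b) f)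
    (hf_nonneg : ∀ y ∈ Ioc a b, 0 ≤ f y) (hx : x ∈ Ioc a b) :
    (x - a) / (b - a) * f b ≤ f x := by
  have hab : a < b := hx.1.trans_le hx.2
  have chord_from : ∀ y ∈ Ioo a x, (x - y) / (b - y) * f b ≤ f x := by
    intro y ⟨hay, hyx⟩
    have hyb : 0 < b - y := by linarith [hx.2]
    have hy : y ∈ Ioc a b := ⟨hay, hyx.le.trans hx.2⟩
    have hs : 0 ≤ (b - x) / (b - y) := div_nonneg (sub_nonneg.2 hx.2) hyb.le
    have ht : 0 ≤ (x - y) / (b - y) := div_nonneg (sub_nonneg.2 hyx.le) hyb.le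
    have hst : (b - x) / (b - y) + (x - y) / (b - y) = 1 := by field_simp; ring
    have hcomb : (b - x) / (b - y) * y + (x - y) / (b - y) * b = x := by field_simp; ring
    have hconc := hf.2 hy (right_mem_Ioc.2 hab) hs ht hst
    simp only [smul_eq_mul, hcomb] at hconc
    linarith [mul_nonneg hs (hf_nonneg y hy)]
  -- `f` need not extend to `a`, so the left end of the chord is moved to `a` in the limit.
  have hlim : Tendsto (fun y => (x - y) / (b - y) * f b) (nhdsWithin a (Ioi a))
      (nhds ((x - a) / (b - a) * f b)) := by
    have hba : b - a ≠ 0 := (sub_pos.2 hab).ne'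
    have hcont : ContinuousAt (fun y => (x - y) / (b - y) * f b) a := by
      fun_prop (disch := exact hba)
    exact hcont.mono_left nhdsWithin_le_nhds
  exact le_of_tendsto hlim (eventually_of_mem (Ioo_mem_nhdsGT hx.1) chord_from)

theorem max_zero_div_le_of_concaveOn_Ioc (hf : ConcaveOn ℝ (Ioc 0 b) f)
    (hf_pos : ∀ y ∈ Ioc 0 b, 0 < f y) (hx : x ∈ Ioc 0 b) :
    max x 0 / f x ≤ b / f b := by
  have hb : 0 < b := hx.1.trans_le hx.2
  have hchord := chord_le_of_concaveOn_Ioc hf (fun y hy => (hf_pos y hy).le) hx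
  rw [sub_zero, sub_zero, div_mul_eq_mul_div, div_le_iff₀ hb] at hchord
  rw [max_eq_left hx.1.le, div_le_div_iff₀ (hf_pos x hx) (hf_pos b (right_mem_Ioc.2 hb))]
  linarith

theorem aemeasurable_of_concaveOn_Ioo {μ : Measure ℝ} (hf : ConcaveOn ℝ (Ioo a b) f) :
    AEMeasurable f (μ.restrict (Ioo a b)) :=
  (hf.continuousOn isOpen_Ioo).aemeasurable measurableSet_Ioo

end Chord

/-- The remainder `F(r) = ∫ (z - r)⁺ / m(z) * q(z) dμ(z)` in the second-order Taylor formula, based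
at `r₀`, of an energy density `U` with `U'' = q / m`. The range of integration is part of `μ`: the
classical case is Lebesgue measure restricted to `(0, r₀)`. -/
noncomputable def energyRemainder (μ : Measure ℝ) (m q : ℝ → ℝ) (r : ℝ) : ℝ :=
  ∫ z, max (z - r) 0 / m z * q z ∂μ

section EnergyRemainder

variable {μ : Measure ℝ} {m q : ℝ → ℝ} {K : ℝ}

theorem ae_norm_energyRemainder_integrand_le (hm : ∀ᵐ z ∂μ, 0 ≤ m z)
    (hK : ∀ᵐ z ∂μ, max z 0 / m z ≤ K) {r : ℝ} (hr : 0 ≤ r) :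
    ∀ᵐ z ∂μ, ‖max (z - r) 0 / m z * q z‖ ≤ K * ‖q z‖ := by
  filter_upwards [hm, hK] with z hmz hKz
  have hkernel : max (z - r) 0 / m z ≤ K := calc
    max (z - r) 0 / m z ≤ max z 0 / m z := by gcongr; exact sub_le_self z hr
    _ ≤ K := hKz
  rw [norm_mul, Real.norm_of_nonneg (div_nonneg (le_max_right _ _) hmz)]
  gcongr

theorem aestronglyMeasurable_energyRemainder_integrand (hm_meas : AEMeasurable m μ)
    (hq : AEStronglyMeasurable q μ) (r : ℝ) :
    AEStronglyMeasurable (fun z => max (z - r) 0 / m z * q z) μ :=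
  have hkernel : AEMeasurable (fun z => max (z - r) 0 / m z) μ :=
    AEMeasurable.div (by fun_prop) hm_meas
  hkernel.aestronglyMeasurable.mul hq

theorem integrable_energyRemainder_integrand (hm_meas : AEMeasurable m μ)
    (hm : ∀ᵐ z ∂μ, 0 ≤ m z) (hK : ∀ᵐ z ∂μ, max z 0 / m z ≤ K) (hq : Integrable q μ)
    {r : ℝ} (hr : 0 ≤ r) :
    Integrable (fun z => max (z - r) 0 / m z * q z) μ :=
  (hq.norm.const_mul K).mono'
    (aestronglyMeasurable_energyRemainder_integrand hm_meas hq.aestronglyMeasurable r)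
    (ae_norm_energyRemainder_integrand_le hm hK hr)

theorem continuousOn_energyRemainder (hm_meas : AEMeasurable m μ)
    (hm : ∀ᵐ z ∂μ, 0 ≤ m z) (hK : ∀ᵐ z ∂μ, max z 0 / m z ≤ K) (hq : Integrable q μ) :
    ContinuousOn (energyRemainder μ m q) (Ici 0) :=
  continuousOn_of_dominated
    (fun r _ => aestronglyMeasurable_energyRemainder_integrand hm_meas hq.aestronglyMeasurable r)
    (fun _ hr => ae_norm_energyRemainder_integrand_le hm hK hr)
    (hq.norm.const_mul K)
    (ae_of_all μ fun _ => by fun_prop)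

theorem antitoneOn_energyRemainder (hm_meas : AEMeasurable m μ)
    (hm : ∀ᵐ z ∂μ, 0 ≤ m z) (hK : ∀ᵐ z ∂μ, max z 0 / m z ≤ K) (hq : Integrable q μ)
    (hq_nonneg : ∀ᵐ z ∂μ, 0 ≤ q z) :
    AntitoneOn (energyRemainder μ m q) (Ici 0) := by
  intro r hr s hs hrs
  refine integral_mono_ae (integrable_energyRemainder_integrand hm_meas hm hK hq hs)
    (integrable_energyRemainder_integrand hm_meas hm hK hq hr) ?_
  filter_upwards [hm, hq_nonneg] with z hmz hqz
  gcongr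

end EnergyRemainder

theorem stmt_7_general {μ : Measure ℝ} {r₀ : ℝ} {m q : ℝ → ℝ}
    (hm_conc : ConcaveOn ℝ (Ioc 0 r₀) m) (hm_pos : ∀ r ∈ Ioc 0 r₀, 0 < m r)
    (hq_nonneg : ∀ z ∈ Ioo 0 r₀, 0 ≤ q z) (hq_int : IntegrableOn q (Ioo 0 r₀) μ) :
    let F := energyRemainder (μ.restrict (Ioo 0 r₀)) m q
    (∃ C : ℝ, ∀ r ∈ Ioo 0 r₀, F r ≤ C) ∧
    AntitoneOn F (Ioo 0 r₀) ∧
    (∃ L : ℝ, Tendsto F (nhdsWithin 0 (Ioi 0)) (nhds L)) ∧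
    (∀ c₁ c₂ : ℝ,
      (∃ C : ℝ, ∀ r ∈ Ioc 0 r₀, |c₁ + c₂ * (r - r₀) + F r| ≤ C) ∧
      ∃ L : ℝ, Tendsto (fun r => c₁ + c₂ * (r - r₀) + F r) (nhdsWithin 0 (Ioi 0)) (nhds L)) := by
  intro F
  have hm_meas : AEMeasurable m (μ.restrict (Ioo 0 r₀)) :=
    aemeasurable_of_concaveOn_Ioo (hm_conc.subset Ioo_subset_Ioc_self (convex_Ioo 0 r₀))
  have hm_nonneg : ∀ᵐ z ∂μ.restrict (Ioo 0 r₀), 0 ≤ m z :=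
    ae_restrict_of_forall_mem measurableSet_Ioo fun z hz => (hm_pos z (Ioo_subset_Ioc_self hz)).le
  have hkernel : ∀ᵐ z ∂μ.restrict (Ioo 0 r₀), max z 0 / m z ≤ r₀ / m r₀ :=
    ae_restrict_of_forall_mem measurableSet_Ioo fun z hz =>
      max_zero_div_le_of_concaveOn_Ioc hm_conc hm_pos (Ioo_subset_Ioc_self hz)
  have hF_cont : ContinuousOn F (Ici 0) :=
    continuousOn_energyRemainder hm_meas hm_nonneg hkernel hq_int
  have hF_anti : AntitoneOn F (Ici 0) :=
    antitoneOn_energyRemainder hm_meas hm_nonneg hkernel hq_int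
      (ae_restrict_of_forall_mem measurableSet_Ioo hq_nonneg)
  have tendsto_zero {G : ℝ → ℝ} (hG : ContinuousOn G (Ici 0)) :
      Tendsto G (nhdsWithin 0 (Ioi 0)) (nhds (G 0)) :=
    (hG 0 self_mem_Ici).mono_left (nhdsWithin_mono 0 Ioi_subset_Ici_self)
  refine ⟨⟨F 0, fun r hr => hF_anti self_mem_Ici hr.1.le hr.1.le⟩,
    hF_anti.mono fun r hr => hr.1.le, ⟨F 0, tendsto_zero hF_cont⟩, fun c₁ c₂ => ?_⟩
  have hU_cont : ContinuousOn (fun r => c₁ + c₂ * (r - r₀) + F r) (Ici 0) := by fun_prop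
  obtain ⟨C, hC⟩ := isCompact_Icc.exists_bound_of_continuousOn
    (hU_cont.mono (Icc_subset_Ici_self : Icc 0 r₀ ⊆ Ici 0))
  exact ⟨⟨C, fun r hr => hC r (Ioc_subset_Icc_self hr)⟩, _, tendsto_zero hU_cont⟩

/-- Boundedness near `0` of energies under the generalized McCann condition:
for a concave, continuous mobility `m > 0` on `(0,r₀]` and an integrable
nonnegative weight `q` on `(0,r₀)`, the function
`F(r) = ∫₀^{r₀} (max(z−r,0)/m(z))·q(z) dz` is bounded above on `(0,r₀)`,
nonincreasing, and has a finite limit as `r ↓ 0`; consequently any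
`U(r) = U(r₀) + U'(r₀)(r−r₀) + F(r)` is bounded on `(0,r₀]` and has a finite
limit as `r ↓ 0`. -/
theorem stmt_7 (r₀ : ℝ) (hr₀ : 0 < r₀) (m : ℝ → ℝ)
    (hm_conc : ConcaveOn ℝ (Icc 0 r₀) m) (hm_cont : ContinuousOn m (Icc 0 r₀))
    (hm_pos : ∀ r ∈ Ioc 0 r₀, 0 < m r)
    (q : ℝ → ℝ) (hq_nonneg : ∀ z ∈ Ioo 0 r₀, 0 ≤ q z)
    (hq_int : IntegrableOn q (Ioo 0 r₀)) :
    (∃ C : ℝ, ∀ r ∈ Ioo 0 r₀,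
      (∫ z in Ioo 0 r₀, (max (z - r) 0 / m z) * q z) ≤ C) ∧
    AntitoneOn (fun r => ∫ z in Ioo 0 r₀, (max (z - r) 0 / m z) * q z)
      (Ioo 0 r₀) ∧
    (∃ L : ℝ, Tendsto (fun r => ∫ z in Ioo 0 r₀, (max (z - r) 0 / m z) * q z)
      (nhdsWithin 0 (Ioi 0)) (nhds L)) ∧
    (∀ c₁ c₂ : ℝ,
      (∃ C : ℝ, ∀ r ∈ Ioc 0 r₀,
        |c₁ + c₂ * (r - r₀) + ∫ z in Ioo 0 r₀, (max (z - r) 0 / m z) * q z| ≤ C) ∧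
      ∃ L : ℝ, Tendsto
        (fun r => c₁ + c₂ * (r - r₀) + ∫ z in Ioo 0 r₀, (max (z - r) 0 / m z) * q z)
        (nhdsWithin 0 (Ioi 0)) (nhds L)) :=
  stmt_7_general (hm_conc.subset Ioc_subset_Icc_self (convex_Ioc 0 r₀)) hm_pos hq_nonneg hq_int
end

section
/- Let d ≥ 1 be an integer. Let m : [0,∞) → [0,∞) be continuous, concave, strictly positive on (0,∞) and of class C¹ on (0,∞), and let P : [0,∞) → ℝ be continuous with P(0) = 0, of class C² on (0,∞), with P'(z)·m'(z) integrable near 0. If the map r ↦ m(r)^{1/d}·P'(r) is strictly positive and nondecreasing on (0,∞), then, setting H(r) := ∫₀^r P'(z)·m'(z) dz, one has P'(r)·m(r) ≥ (1 − 1/d)·H(r) ≥ 0 for every r > 0; that is, P satisfies the generalized McCann condition GMC(m, d). -/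
open Set MeasureTheory

/-!
Put `θ = 1/d`, `α = 1 - θ` and `p = P'`. A concave function that is bounded below on a half-line is
nondecreasing, so `m' ≥ 0`. As `m ^ θ * p` is nondecreasing, on `(0, r]`
`α p m' = (m ^ θ p) (m ^ α)' ≤ m(r) ^ θ p(r) (m ^ α)'`.
The integral of the derivative of a nondecreasing function is at most its increment, hence
`α ∫ p m' ≤ m(r) ^ θ p(r) (m(r) ^ α - m(a) ^ α) ≤ p(r) m(r)`
for the integral over `[a, r]`, and `a` tends to `0`.
-/

open scoped Topology

theorem monotoneOn_of_concaveOn_of_bddBelow {𝕜 : Type*} [Field 𝕜] [LinearOrder 𝕜]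
    [IsStrictOrderedRing 𝕜] {s : Set 𝕜} {f : 𝕜 → 𝕜} (hf : ConcaveOn 𝕜 s f)
    (hs : ¬BddAbove s) (hbdd : BddBelow (f '' s)) : MonotoneOn f s := by
  intro x hx y hy hxy
  by_contra! hlt
  obtain ⟨B, hB⟩ := hbdd
  have hxy' : x < y := hxy.lt_of_ne fun h => hlt.ne' (congrArg f h)
  set k := (f y - f x) / (y - x)
  have hk : k < 0 := div_neg_of_neg_of_pos (sub_neg.2 hlt) (sub_pos.2 hxy')
  obtain ⟨z, hz, hlarge⟩ := not_bddAbove_iff.1 hs (y + (f y - B) / -k)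
  have hyB : 0 ≤ f y - B := sub_nonneg.2 (hB (mem_image_of_mem f hy))
  have hyz : y < z := (le_add_of_nonneg_right (div_nonneg hyB (neg_nonneg.2 hk.le))).trans_lt hlarge
  have hslope : f z - f y ≤ k * (z - y) :=
    (div_le_iff₀ (sub_pos.2 hyz)).1 (hf.slope_anti_adjacent hx hz hxy' hyz)
  have hdrop : f y - B < (z - y) * -k :=
    (div_lt_iff₀ (neg_pos.2 hk)).1 (lt_sub_iff_add_lt'.2 hlarge)
  have hBz : B ≤ f z := hB (mem_image_of_mem f hz)
  linarith

theorem deriv_nonneg_of_monotoneOn_of_mem_nhds {𝕜 : Type*} [NontriviallyNormedField 𝕜]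
    [LinearOrder 𝕜] [IsStrictOrderedRing 𝕜] [OrderTopology 𝕜] {f : 𝕜 → 𝕜} {s : Set 𝕜} {x : 𝕜}
    (hf : MonotoneOn f s) (hs : s ∈ 𝓝 x) : 0 ≤ deriv f x :=
  derivWithin_of_mem_nhds (f := f) hs ▸ hf.derivWithin_nonneg

theorem monotoneOn_rpow_const {β : Type*} [Preorder β] {f : β → ℝ} {s : Set β} {q : ℝ}
    (hf : MonotoneOn f s) (hnonneg : ∀ x ∈ s, 0 ≤ f x) (hq : 0 ≤ q) :
    MonotoneOn (fun x => f x ^ q) s :=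
  (Real.monotoneOn_rpow_Ici_of_exponent_nonneg hq).comp hf hnonneg

theorem intervalIntegral_deriv_le_sub_of_monotoneOn {f : ℝ → ℝ} {a b : ℝ} (hab : a ≤ b)
    (hf : MonotoneOn f (Icc a b)) : ∫ x in a..b, deriv f x ≤ f b - f a := by
  have hincr : 0 ≤ f b - f a := sub_nonneg.2 (hf (left_mem_Icc.2 hab) (right_mem_Icc.2 hab) hab)
  rw [← uIcc_of_le hab] at hf
  have hmem := hf.intervalIntegral_deriv_mem_uIcc
  rw [uIcc_of_le hincr] at hmem
  exact hmem.2

theorem intervalIntegral_le_of_forall_mem_Ioc {f : ℝ → ℝ} {μ : Measure ℝ} [NullSingletonClass μ]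
    {a b C : ℝ} (hab : a < b) (hf : IntervalIntegrable f μ a b)
    (h : ∀ x ∈ Ioc a b, ∫ t in x..b, f t ∂μ ≤ C) :
    ∫ t in a..b, f t ∂μ ≤ C := by
  have hcont : ContinuousOn (fun x => ∫ t in x..b, f t ∂μ) (uIcc a b) := by
    refine intervalIntegral.continuousOn_primitive_interval_left ?_
    rwa [uIcc_of_le hab.le, ← intervalIntegrable_iff_integrableOn_Icc_of_le hab.le]
  rw [uIcc_of_le hab.le, ← closure_Ioc hab.ne] at hcont
  exact le_on_closure h hcont continuousOn_const (closure_Ioc hab.ne ▸ left_mem_Icc.2 hab.le)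

section

variable {m p : ℝ → ℝ} {s : Set ℝ} {θ a b : ℝ}

theorem mul_deriv_le_rpow_mul_deriv_rpow {z : ℝ} (hm : MonotoneOn m s) (hpos : ∀ x ∈ s, 0 < m x)
    (hs : s ∈ 𝓝 z) (hθ : θ ≤ 1) :
    (1 - θ) * deriv m z ≤ m z ^ θ * deriv (fun x => m x ^ (1 - θ)) z := by
  have hmz : 0 < m z := hpos z (mem_of_mem_nhds hs)
  by_cases hd : DifferentiableAt ℝ m z
  · have hcancel : m z ^ θ * m z ^ (1 - θ - 1) = 1 := by
      rw [← Real.rpow_add hmz, show θ + (1 - θ - 1) = 0 by ring, Real.rpow_zero]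
    rw [deriv_rpow_const hd (Or.inl hmz.ne')]
    linear_combination (-(1 - θ) * deriv m z) * hcancel
  · rw [deriv_zero_of_not_differentiableAt hd, mul_zero]
    exact mul_nonneg (Real.rpow_nonneg hmz.le _) (deriv_nonneg_of_monotoneOn_of_mem_nhds
      (monotoneOn_rpow_const hm (fun x hx => (hpos x hx).le) (sub_nonneg.2 hθ)) hs)

theorem intervalIntegrable_mul_deriv (hab : a ≤ b) (hm : MonotoneOn m (Icc a b))
    (hpos : ∀ z ∈ Icc a b, 0 < m z) (hθ : 0 ≤ θ) (hp : ∀ z ∈ Icc a b, 0 ≤ p z)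
    (hmono : MonotoneOn (fun z => m z ^ θ * p z) (Icc a b)) :
    IntervalIntegrable (fun z => p z * deriv m z) volume a b := by
  have ha := left_mem_Icc.2 hab
  have hmθ := monotoneOn_rpow_const hm (fun z hz => (hpos z hz).le) hθ
  have hm' : IntervalIntegrable (deriv m) volume a b :=
    MonotoneOn.intervalIntegrable_deriv (by rwa [uIcc_of_le hab])
  rw [intervalIntegrable_iff_integrableOn_Icc_of_le hab] at hm' ⊢
  have hp_meas : AEStronglyMeasurable p (volume.restrict (Icc a b)) := by
    refine (((aemeasurable_restrict_of_monotoneOn measurableSet_Icc hmono).div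
      (aemeasurable_restrict_of_monotoneOn measurableSet_Icc hmθ)).congr ?_).aestronglyMeasurable
    filter_upwards [ae_restrict_mem measurableSet_Icc] with z hz
    exact mul_div_cancel_left₀ (p z) (Real.rpow_pos_of_pos (hpos z hz) θ).ne'
  refine hm'.bdd_mul (c := m b ^ θ * p b / m a ^ θ) hp_meas ?_
  filter_upwards [ae_restrict_mem measurableSet_Icc] with z hz
  rw [Real.norm_of_nonneg (hp z hz), le_div_iff₀' (Real.rpow_pos_of_pos (hpos a ha) θ)]
  calc m a ^ θ * p z ≤ m z ^ θ * p z :=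
        mul_le_mul_of_nonneg_right (hmθ ha hz hz.1) (hp z hz)
    _ ≤ m b ^ θ * p b := hmono hz (right_mem_Icc.2 hab) hz.2

theorem mul_integral_mul_deriv_le (hab : a ≤ b) (hm : MonotoneOn m (Icc a b))
    (hpos : ∀ z ∈ Icc a b, 0 < m z) (hθ : θ ∈ Icc 0 1) (hp : ∀ z ∈ Icc a b, 0 ≤ p z)
    (hmono : MonotoneOn (fun z => m z ^ θ * p z) (Icc a b)) :
    (1 - θ) * ∫ z in a..b, p z * deriv m z ≤
      m b ^ θ * p b * (m b ^ (1 - θ) - m a ^ (1 - θ)) := by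
  have hb := right_mem_Icc.2 hab
  have hα : MonotoneOn (fun z => m z ^ (1 - θ)) (Icc a b) :=
    monotoneOn_rpow_const hm (fun z hz => (hpos z hz).le) (sub_nonneg.2 hθ.2)
  have hα' : IntervalIntegrable (deriv fun x => m x ^ (1 - θ)) volume a b :=
    MonotoneOn.intervalIntegrable_deriv (by rwa [uIcc_of_le hab])
  have hpointwise : ∀ z ∈ Ioo a b, (1 - θ) * (p z * deriv m z) ≤
      m b ^ θ * p b * deriv (fun x => m x ^ (1 - θ)) z := by
    intro z hz
    have hz' := Ioo_subset_Icc_self hz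
    have hnhds := Icc_mem_nhds hz.1 hz.2
    calc (1 - θ) * (p z * deriv m z) = p z * ((1 - θ) * deriv m z) := by ring
      _ ≤ p z * (m z ^ θ * deriv (fun x => m x ^ (1 - θ)) z) :=
          mul_le_mul_of_nonneg_left (mul_deriv_le_rpow_mul_deriv_rpow hm hpos hnhds hθ.2) (hp z hz')
      _ = m z ^ θ * p z * deriv (fun x => m x ^ (1 - θ)) z := by ring
      _ ≤ m b ^ θ * p b * deriv (fun x => m x ^ (1 - θ)) z :=
          mul_le_mul_of_nonneg_right (hmono hz' hb hz.2.le)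
            (deriv_nonneg_of_monotoneOn_of_mem_nhds hα hnhds)
  calc (1 - θ) * ∫ z in a..b, p z * deriv m z = ∫ z in a..b, (1 - θ) * (p z * deriv m z) :=
        (intervalIntegral.integral_const_mul _ _).symm
    _ ≤ ∫ z in a..b, m b ^ θ * p b * deriv (fun x => m x ^ (1 - θ)) z :=
        intervalIntegral.integral_mono_on_of_le_Ioo hab
          ((intervalIntegrable_mul_deriv hab hm hpos hθ.1 hp hmono).const_mul _)
          (hα'.const_mul _) hpointwise
    _ = m b ^ θ * p b * ∫ z in a..b, deriv (fun x => m x ^ (1 - θ)) z :=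
        intervalIntegral.integral_const_mul _ _
    _ ≤ m b ^ θ * p b * (m b ^ (1 - θ) - m a ^ (1 - θ)) :=
        mul_le_mul_of_nonneg_left (intervalIntegral_deriv_le_sub_of_monotoneOn hab hα)
          (mul_nonneg (Real.rpow_nonneg (hpos b hb).le θ) (hp b hb))

theorem mul_integral_mul_deriv_le_mul (hab : a ≤ b) (hm : MonotoneOn m (Icc a b))
    (hpos : ∀ z ∈ Icc a b, 0 < m z) (hθ : θ ∈ Icc 0 1) (hp : ∀ z ∈ Icc a b, 0 ≤ p z)
    (hmono : MonotoneOn (fun z => m z ^ θ * p z) (Icc a b)) :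
    (1 - θ) * ∫ z in a..b, p z * deriv m z ≤ p b * m b := by
  have hb := right_mem_Icc.2 hab
  calc (1 - θ) * ∫ z in a..b, p z * deriv m z
      ≤ m b ^ θ * p b * (m b ^ (1 - θ) - m a ^ (1 - θ)) :=
        mul_integral_mul_deriv_le hab hm hpos hθ hp hmono
    _ ≤ m b ^ θ * p b * m b ^ (1 - θ) :=
        mul_le_mul_of_nonneg_left
          (sub_le_self _ (Real.rpow_nonneg (hpos a (left_mem_Icc.2 hab)).le _))
          (mul_nonneg (Real.rpow_nonneg (hpos b hb).le θ) (hp b hb))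
    _ = p b * (m b ^ θ * m b ^ (1 - θ)) := by ring
    _ = p b * m b := by rw [← Real.rpow_add (hpos b hb), add_sub_cancel, Real.rpow_one]

end

/-- Here `deriv m` is the almost everywhere derivative of the nondecreasing function `m`; on the
null set of points where `m` is not differentiable it takes the value `0`. -/
theorem stmt_8_general {θ : ℝ} (hθ : θ ∈ Icc 0 1) {m p : ℝ → ℝ} (hm : MonotoneOn m (Ioi 0))
    (hpos : ∀ r : ℝ, 0 < r → 0 < m r)
    (hint : ∃ ε : ℝ, 0 < ε ∧ IntegrableOn (fun z => p z * deriv m z) (Ioc 0 ε))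
    (hnonneg : ∀ r : ℝ, 0 < r → 0 ≤ m r ^ θ * p r)
    (hmono : MonotoneOn (fun r => m r ^ θ * p r) (Ioi 0)) {r : ℝ} (hr : 0 < r) :
    p r * m r ≥ (1 - θ) * ∫ z in Ioc 0 r, p z * deriv m z ∧
      0 ≤ ∫ z in Ioc 0 r, p z * deriv m z := by
  have hp : ∀ r : ℝ, 0 < r → 0 ≤ p r := fun r hr =>
    nonneg_of_mul_nonneg_right (hnonneg r hr) (Real.rpow_pos_of_pos (hpos r hr) θ)
  refine ⟨?_, setIntegral_nonneg measurableSet_Ioc fun z hz =>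
    mul_nonneg (hp z hz.1) (deriv_nonneg_of_monotoneOn_of_mem_nhds hm (Ioi_mem_nhds hz.1))⟩
  have hsub : ∀ a : ℝ, 0 < a → Icc a r ⊆ Ioi 0 := fun a ha z hz => ha.trans_le hz.1
  have hint_r : IntervalIntegrable (fun z => p z * deriv m z) volume 0 r := by
    obtain ⟨ε, hε, hint⟩ := hint
    have hδ : 0 < min ε r := lt_min hε hr
    refine IntervalIntegrable.trans (b := min ε r) ?_ ?_
    · rw [intervalIntegrable_iff_integrableOn_Ioc_of_le hδ.le]
      exact hint.mono_set (Ioc_subset_Ioc_right (min_le_left ε r))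
    · exact intervalIntegrable_mul_deriv (min_le_right ε r) (hm.mono (hsub _ hδ))
        (fun z hz => hpos z (hsub _ hδ hz)) hθ.1 (fun z hz => hp z (hsub _ hδ hz))
        (hmono.mono (hsub _ hδ))
  rw [← intervalIntegral.integral_of_le hr.le, ← intervalIntegral.integral_const_mul]
  refine intervalIntegral_le_of_forall_mem_Ioc hr (hint_r.const_mul _) fun a ha => ?_
  rw [intervalIntegral.integral_const_mul]
  exact mul_integral_mul_deriv_le_mul ha.2 (hm.mono (hsub a ha.1))
    (fun z hz => hpos z (hsub a ha.1 hz)) hθ (fun z hz => hp z (hsub a ha.1 hz))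
    (hmono.mono (hsub a ha.1))

/-- A sufficient condition for the generalized McCann condition `GMC(m,d)`:
if `m` is a smooth mobility on `(0,∞)`, `P` is a smooth pressure with
`P'·m'` integrable near `0`, and `r ↦ m(r)^{1/d}·P'(r)` is strictly positive
and nondecreasing on `(0,∞)`, then `P'(r)·m(r) ≥ (1 − 1/d)·H(r) ≥ 0` for every
`r > 0`, where `H(r) = ∫₀^r P'·m'`. -/
theorem stmt_8 (d : ℕ) (hd : 1 ≤ d) (m : ℝ → ℝ)
    (hm_cont : ContinuousOn m (Ici 0)) (hm_conc : ConcaveOn ℝ (Ici 0) m)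
    (hm_pos : ∀ r : ℝ, 0 < r → 0 < m r) (hm_C1 : ContDiffOn ℝ 1 m (Ioi 0))
    (P : ℝ → ℝ) (hP_cont : ContinuousOn P (Ici 0)) (hP0 : P 0 = 0)
    (hP_C2 : ContDiffOn ℝ 2 P (Ioi 0))
    (hint : ∃ ε : ℝ, 0 < ε ∧
      IntegrableOn (fun z => deriv P z * deriv m z) (Ioc 0 ε))
    (hcond_pos : ∀ r : ℝ, 0 < r → 0 < m r ^ ((1:ℝ) / d) * deriv P r)
    (hcond_mono : MonotoneOn (fun r => m r ^ ((1:ℝ) / d) * deriv P r) (Ioi 0)) :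
    ∀ r : ℝ, 0 < r →
      deriv P r * m r ≥ (1 - 1 / (d : ℝ)) * ∫ z in Ioc 0 r, deriv P z * deriv m z ∧
      0 ≤ ∫ z in Ioc 0 r, deriv P z * deriv m z := by
  have hm : MonotoneOn m (Ioi 0) :=
    monotoneOn_of_concaveOn_of_bddBelow (hm_conc.subset Ioi_subset_Ici_self (convex_Ioi 0))
      (not_bddAbove_Ioi 0) ⟨0, forall_mem_image.2 fun r hr => (hm_pos r hr).le⟩
  exact fun r => stmt_8_general
    ⟨by positivity, div_le_one_of_le₀ (Nat.one_le_cast.2 hd) d.cast_nonneg⟩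
    hm hm_pos hint (fun r hr => (hcond_pos r hr).le) hcond_mono
end

section
/- Let κ ∈ (0,1), r₀ > 0, a ≥ 0. Let m : [r₀,∞) → (0,∞) be nondecreasing and locally absolutely continuous with derivative m' ≥ 0, and let f : [r₀,∞) → [0,∞) be locally integrable and satisfy f(r) ≥ κ·( a + ∫_{r₀}^r f(z)·(m'(z)/m(z)) dz ) for almost every r ≥ r₀. Then f(r) ≥ κ·a·( m(r)/m(r₀) )^κ for almost every r ≥ r₀. In particular, if d > 1, m is a concave nondecreasing mobility, P is a pressure with H(r) := ∫₀^r P'·m' satisfying P'(r)·m(r) ≥ (1 − 1/d)·H(r) a.e. on (0,∞), then for every r₀ > 0, P'(r) ≥ c₀·m(r)^{−1/d} for almost every r ≥ r₀, with c₀ := (1 − 1/d)·H(r₀)·m(r₀)^{1/d − 1}. -/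
open Set MeasureTheory

/-!
If `G' ≥ κ * G * (m' / m)` almost everywhere, then `(G * m ^ (-κ))' ≥ 0` almost everywhere.
Since `G` and `m ^ (-κ)` are absolutely continuous on compact intervals, `G * m ^ (-κ)` is
nondecreasing. The Gronwall bound is the case `G r = a + ∫ z in r₀..r, f z * (m' z / m z)`, and the
lower bound on the pressure is the Gronwall bound for `f = P' * m`, because then
`f * (m' / m) = P' * m'` and `a + ∫ z in r₀..r, P' z * m' z = H r` for `a = H r₀`.
-/

section AbsoluteContinuity

variable {X Y : Type*} [PseudoMetricSpace X] [PseudoMetricSpace Y] {a b : ℝ}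

lemma absolutelyContinuousOnInterval_congr {f g : ℝ → X}
    (hf : AbsolutelyContinuousOnInterval f a b) (hfg : EqOn f g (uIcc a b)) :
    AbsolutelyContinuousOnInterval g a b := by
  rw [absolutelyContinuousOnInterval_iff] at hf ⊢
  intro ε hε
  obtain ⟨δ, hδ, h⟩ := hf ε hε
  refine ⟨δ, hδ, fun E hE hEδ ↦ (Finset.sum_congr rfl fun i hi ↦ ?_).trans_lt (h E hE hEδ)⟩
  rw [hfg (hE.1 i hi).1, hfg (hE.1 i hi).2]

lemma absolutelyContinuousOnInterval_comp_of_lipschitzOnWith {φ : X → Y} {g : ℝ → X} {s : Set X}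
    {K : NNReal} (hφ : LipschitzOnWith K φ s) (hg : AbsolutelyContinuousOnInterval g a b)
    (hgs : MapsTo g (uIcc a b) s) :
    AbsolutelyContinuousOnInterval (φ ∘ g) a b := by
  refine squeeze_zero' (.of_forall fun E ↦ Finset.sum_nonneg fun _ _ ↦ dist_nonneg) ?_
    (by simpa only [mul_zero] using Filter.Tendsto.const_mul (K : ℝ) hg)
  filter_upwards [Filter.mem_inf_of_right (Filter.mem_principal_self _)] with E hE
  rw [Finset.mul_sum]
  exact Finset.sum_le_sum fun i hi ↦
    hφ.dist_le_mul _ (hgs (hE.1 i hi).1) _ (hgs (hE.1 i hi).2)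

lemma absolutelyContinuousOnInterval_comp_of_locallyLipschitzOn {E : Type*}
    [SeminormedAddCommGroup E] {φ : E → Y} {g : ℝ → E} {s : Set E} (hφ : LocallyLipschitzOn s φ)
    (hg : AbsolutelyContinuousOnInterval g a b) (hgs : MapsTo g (uIcc a b) s) :
    AbsolutelyContinuousOnInterval (φ ∘ g) a b := by
  obtain ⟨K, hK⟩ := (hφ.mono hgs.image_subset).exists_lipschitzOnWith_of_compact
    (isCompact_uIcc.image_of_continuousOn hg.continuousOn)
  exact absolutelyContinuousOnInterval_comp_of_lipschitzOnWith hK hg (mapsTo_image g _)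

lemma absolutelyContinuousOnInterval_of_locallyLipschitzOn {f : ℝ → X}
    (hf : LocallyLipschitzOn (uIcc a b) f) : AbsolutelyContinuousOnInterval f a b :=
  let ⟨_, hK⟩ := hf.exists_lipschitzOnWith_of_compact isCompact_uIcc
  hK.absolutelyContinuousOnInterval

lemma absolutelyContinuousOnInterval_const (x : X) :
    AbsolutelyContinuousOnInterval (fun _ ↦ x) a b :=
  (LipschitzWith.const x).lipschitzOnWith.absolutelyContinuousOnInterval

lemma absolutelyContinuousOnInterval_rpow_const {f : ℝ → ℝ}
    (hf : AbsolutelyContinuousOnInterval f a b) (hpos : ∀ x ∈ uIcc a b, 0 < f x) (q : ℝ) :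
    AbsolutelyContinuousOnInterval (fun x ↦ f x ^ q) a b := by
  have hrpow : ContDiffOn ℝ 1 (fun y : ℝ ↦ y ^ q) (Ioi 0) := fun y hy ↦
    (Real.contDiffAt_rpow_const_of_ne (ne_of_gt hy)).contDiffWithinAt
  exact absolutelyContinuousOnInterval_comp_of_locallyLipschitzOn
    (hrpow.locallyLipschitzOn (convex_Ioi 0)) hf hpos

lemma le_of_absolutelyContinuousOnInterval_of_ae_deriv_nonneg {f : ℝ → ℝ} (hab : a ≤ b)
    (hf : AbsolutelyContinuousOnInterval f a b)
    (hf' : ∀ᵐ x ∂volume.restrict (Ioo a b), 0 ≤ deriv f x) : f a ≤ f b := by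
  rw [restrict_Ioo_eq_restrict_Icc] at hf'
  rw [← sub_nonneg, ← hf.integral_deriv_eq_sub]
  exact intervalIntegral.integral_nonneg_of_ae_restrict hab hf'

end AbsoluteContinuity

/-- `F` is locally absolutely continuous on `s` with almost everywhere derivative `f`, encoded by
the fundamental theorem of calculus on all intervals with end points in `s`. -/
def IsPrimitiveOn (F f : ℝ → ℝ) (s : Set ℝ) : Prop :=
  ∀ x ∈ s, ∀ y ∈ s, IntervalIntegrable f volume x y ∧ ∫ z in x..y, f z = F y - F x

namespace IsPrimitiveOn

variable {F f : ℝ → ℝ} {a b : ℝ} {s t : Set ℝ}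

lemma mono (h : IsPrimitiveOn F f s) (hts : t ⊆ s) : IsPrimitiveOn F f t :=
  fun x hx y hy ↦ h x (hts hx) y (hts hy)

lemma of_Ici (hf : ∀ x, a ≤ x → IntegrableOn f (Ioc a x))
    (hF : ∀ x, a ≤ x → F x = F a + ∫ z in Ioc a x, f z) : IsPrimitiveOn F f (Ici a) := by
  have hint : ∀ x, a ≤ x → IntervalIntegrable f volume a x := fun x hx ↦
    (intervalIntegrable_iff_integrableOn_Ioc_of_le hx).2 (hf x hx)
  intro x hx y hy
  refine ⟨(hint x hx).symm.trans (hint y hy), ?_⟩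
  rw [← intervalIntegral.integral_interval_sub_left (hint y hy) (hint x hx), hF x hx, hF y hy,
    intervalIntegral.integral_of_le hx, intervalIntegral.integral_of_le hy]
  ring

lemma of_absolutelyContinuousOnInterval (hs : s.OrdConnected)
    (hF : ∀ x ∈ s, ∀ y ∈ s, AbsolutelyContinuousOnInterval F x y)
    (hf : ∀ᵐ x ∂volume.restrict s, HasDerivAt F (f x) x) : IsPrimitiveOn F f s := by
  intro x hx y hy
  have hderiv : deriv F =ᵐ[volume.restrict (uIoc x y)] f :=
    ae_restrict_of_ae_restrict_of_subset (uIoc_subset_uIcc.trans (hs.uIcc_subset hx hy))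
      (hf.mono fun _ h ↦ h.deriv)
  refine ⟨(hF x hx y hy).intervalIntegrable_deriv.congr_ae hderiv, ?_⟩
  rw [← (hF x hx y hy).integral_deriv_eq_sub]
  exact (intervalIntegral.integral_congr_ae_restrict hderiv).symm

lemma of_concaveOn (hs : IsOpen s) (hF : ConcaveOn ℝ s F)
    (hf : ∀ᵐ x ∂volume.restrict s, HasDerivAt F (f x) x) : IsPrimitiveOn F f s :=
  .of_absolutelyContinuousOnInterval hF.1.ordConnected
    (fun _ hx _ hy ↦ absolutelyContinuousOnInterval_of_locallyLipschitzOn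
      ((hF.locallyLipschitzOn hs).mono (hF.1.ordConnected.uIcc_subset hx hy))) hf

lemma absolutelyContinuousOnInterval (h : IsPrimitiveOn F f (uIcc a b)) :
    AbsolutelyContinuousOnInterval F a b := by
  have hint := (h a left_mem_uIcc b right_mem_uIcc).1
  refine absolutelyContinuousOnInterval_congr ((absolutelyContinuousOnInterval_const (F a)).fun_add
    (hint.absolutelyContinuousOnInterval_intervalIntegral left_mem_uIcc)) fun x hx ↦ ?_
  simp only [(h a left_mem_uIcc x hx).2, add_sub_cancel]

lemma ae_hasDerivAt (hab : a ≤ b) (h : IsPrimitiveOn F f (Icc a b)) :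
    ∀ᵐ x ∂volume.restrict (Ioo a b), HasDerivAt F (f x) x := by
  have ha : a ∈ Icc a b := left_mem_Icc.2 hab
  rw [ae_restrict_iff' measurableSet_Ioo]
  filter_upwards [(h a ha b (right_mem_Icc.2 hab)).1.ae_hasDerivAt_integral] with x hx hxab
  rw [uIcc_of_le hab] at hx
  refine ((hx (Ioo_subset_Icc_self hxab) a ha).const_add (F a)).congr_of_eventuallyEq ?_
  filter_upwards [Ioo_mem_nhds hxab.1 hxab.2] with y hy
  rw [(h a ha y (Ioo_subset_Icc_self hy)).2, add_sub_cancel]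

end IsPrimitiveOn

section Gronwall

lemma hasDerivAt_mul_rpow_neg {G m : ℝ → ℝ} {G' m' x : ℝ} (κ : ℝ) (hG : HasDerivAt G G' x)
    (hm : HasDerivAt m m' x) (hpos : 0 < m x) :
    HasDerivAt (fun y ↦ G y * m y ^ (-κ)) ((G' - κ * G x * (m' / m x)) * m x ^ (-κ)) x := by
  convert! hG.fun_mul (hm.rpow_const (p := -κ) (.inl hpos.ne')) using 1
  rw [Real.rpow_sub_one hpos.ne']
  ring

variable {m m' : ℝ → ℝ} {κ a r₀ : ℝ}

lemma mul_div_rpow_le_of_mul_rpow_neg_le {u v x y : ℝ} (hu : 0 < u) (hv : 0 < v)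
    (h : x * u ^ (-κ) ≤ y * v ^ (-κ)) : x * (v / u) ^ κ ≤ y := by
  rw [Real.rpow_neg hv.le, ← div_eq_mul_inv y, le_div_iff₀ (Real.rpow_pos_of_pos hv κ)] at h
  rwa [Real.div_rpow hv.le hu.le, div_eq_inv_mul, ← Real.rpow_neg hu.le, ← mul_assoc]

theorem mul_rpow_le_of_ae_mul_le_deriv {G G' : ℝ → ℝ} {r R : ℝ} (hrR : r ≤ R)
    (hG : IsPrimitiveOn G G' (Icc r R)) (hm : IsPrimitiveOn m m' (Icc r R))
    (hpos : ∀ x ∈ Icc r R, 0 < m x)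
    (hineq : ∀ᵐ x ∂volume.restrict (Ioo r R), κ * G x * (m' x / m x) ≤ G' x) :
    G r * (m R / m r) ^ κ ≤ G R := by
  have hIcc : uIcc r R = Icc r R := uIcc_of_le hrR
  have hac : AbsolutelyContinuousOnInterval (fun x ↦ G x * m x ^ (-κ)) r R := by
    rw [← hIcc] at hG hm hpos
    exact hG.absolutelyContinuousOnInterval.fun_mul
      (absolutelyContinuousOnInterval_rpow_const hm.absolutelyContinuousOnInterval hpos (-κ))
  have hmono : G r * m r ^ (-κ) ≤ G R * m R ^ (-κ) := by
    refine le_of_absolutelyContinuousOnInterval_of_ae_deriv_nonneg hrR hac ?_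
    filter_upwards [hG.ae_hasDerivAt hrR, hm.ae_hasDerivAt hrR, hineq,
      ae_restrict_mem measurableSet_Ioo] with x hGx hmx hx hxI
    have hmx_pos := hpos x (Ioo_subset_Icc_self hxI)
    rw [(hasDerivAt_mul_rpow_neg κ hGx hmx hmx_pos).deriv]
    exact mul_nonneg (sub_nonneg.2 hx) (Real.rpow_nonneg hmx_pos.le _)
  exact mul_div_rpow_le_of_mul_rpow_neg_le (hpos r (left_mem_Icc.2 hrR))
    (hpos R (right_mem_Icc.2 hrR)) hmono

theorem ae_mul_rpow_le_of_ae_mul_add_integral_le {f : ℝ → ℝ} (hκ : 0 ≤ κ)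
    (hm : IsPrimitiveOn m m' (Ici r₀)) (hpos : ∀ r ∈ Ici r₀, 0 < m r)
    (hm' : ∀ᵐ r ∂volume.restrict (Ioi r₀), 0 ≤ m' r)
    (hint : ∀ R, r₀ ≤ R → IntegrableOn (fun z ↦ f z * (m' z / m z)) (Ioc r₀ R))
    (hf : ∀ᵐ r ∂volume.restrict (Ici r₀),
      κ * (a + ∫ z in Ioc r₀ r, f z * (m' z / m z)) ≤ f r) :
    ∀ᵐ r ∂volume.restrict (Ici r₀), κ * a * (m r / m r₀) ^ κ ≤ f r := by
  set G : ℝ → ℝ := fun r ↦ a + ∫ z in Ioc r₀ r, f z * (m' z / m z) with hG_def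
  have hG₀ : G r₀ = a := by simp only [hG_def, Ioc_self, setIntegral_empty, add_zero]
  have hG : IsPrimitiveOn G (fun z ↦ f z * (m' z / m z)) (Ici r₀) :=
    .of_Ici hint fun r _ ↦ by rw [hG₀]
  have hG' : ∀ᵐ r ∂volume.restrict (Ioi r₀), κ * G r * (m' r / m r) ≤ f r * (m' r / m r) := by
    filter_upwards [hm', ae_restrict_of_ae_restrict_of_subset Ioi_subset_Ici_self hf,
      ae_restrict_mem measurableSet_Ioi] with r hm'r hfr hr
    exact mul_le_mul_of_nonneg_right hfr (div_nonneg hm'r (hpos r (Ioi_subset_Ici_self hr)).le)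
  filter_upwards [hf, ae_restrict_mem measurableSet_Ici] with R hfR hR
  have hgrowth : G r₀ * (m R / m r₀) ^ κ ≤ G R :=
    mul_rpow_le_of_ae_mul_le_deriv hR (hG.mono Icc_subset_Ici_self) (hm.mono Icc_subset_Ici_self)
      (fun x hx ↦ hpos x hx.1) (ae_restrict_of_ae_restrict_of_subset Ioo_subset_Ioi_self hG')
  calc κ * a * (m R / m r₀) ^ κ = κ * (G r₀ * (m R / m r₀) ^ κ) := by rw [hG₀, mul_assoc]
    _ ≤ κ * G R := mul_le_mul_of_nonneg_left hgrowth hκ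
    _ ≤ f R := hfR

theorem ae_mul_rpow_le_of_generalizedMcCann {p : ℝ → ℝ} (hκ : 0 ≤ κ)
    (hm : IsPrimitiveOn m m' (Ioi 0)) (hpos : ∀ r, 0 < r → 0 < m r)
    (hm' : ∀ᵐ r ∂volume.restrict (Ioi 0), 0 ≤ m' r)
    (hint : ∀ R, 0 < R → IntegrableOn (fun z ↦ p z * m' z) (Ioc 0 R))
    (hp : ∀ᵐ r ∂volume.restrict (Ioi 0), κ * ∫ z in Ioc 0 r, p z * m' z ≤ p r * m r)
    (hr₀ : 0 < r₀) :
    ∀ᵐ r ∂volume.restrict (Ici r₀),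
      κ * (∫ z in Ioc 0 r₀, p z * m' z) * m r₀ ^ (-κ) * m r ^ (κ - 1) ≤ p r := by
  have hsub : Ici r₀ ⊆ Ioi 0 := Ici_subset_Ioi.2 hr₀
  have hcancel : ∀ r,
      EqOn (fun z ↦ p z * m z * (m' z / m z)) (fun z ↦ p z * m' z) (Ioc r₀ r) := by
    intro r z hz
    have hmz := hpos z (hr₀.trans hz.1)
    field_simp
  have hint₀ : ∀ r, r₀ ≤ r → IntegrableOn (fun z ↦ p z * m' z) (Ioc r₀ r) := fun r hr ↦
    (hint r (hr₀.trans_le hr)).mono_set (Ioc_subset_Ioc_left hr₀.le)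
  have hsplit : ∀ r, r₀ ≤ r → ∫ z in Ioc 0 r, p z * m' z =
      (∫ z in Ioc 0 r₀, p z * m' z) + ∫ z in Ioc r₀ r, p z * m z * (m' z / m z) := by
    intro r hr
    rw [setIntegral_congr_fun measurableSet_Ioc (hcancel r), ← Ioc_union_Ioc_eq_Ioc hr₀.le hr,
      setIntegral_union (Ioc_disjoint_Ioc_of_le le_rfl) measurableSet_Ioc (hint r₀ hr₀)
        (hint₀ r hr)]
  have hpm : ∀ᵐ r ∂volume.restrict (Ici r₀),
      κ * (∫ z in Ioc 0 r₀, p z * m' z) * (m r / m r₀) ^ κ ≤ p r * m r := by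
    refine ae_mul_rpow_le_of_ae_mul_add_integral_le hκ (hm.mono hsub) (fun r hr ↦ hpos r (hsub hr))
      (ae_restrict_of_ae_restrict_of_subset (Ioi_subset_Ioi hr₀.le) hm')
      (fun r hr ↦ (hint₀ r hr).congr_fun (hcancel r).symm measurableSet_Ioc) ?_
    filter_upwards [ae_restrict_of_ae_restrict_of_subset hsub hp,
      ae_restrict_mem measurableSet_Ici] with r hpr hr
    rwa [← hsplit r hr]
  filter_upwards [hpm, ae_restrict_mem measurableSet_Ici] with r hpr hr
  have hmr := hpos r (hsub hr)
  rw [Real.div_rpow hmr.le (hpos r₀ hr₀).le, ← div_le_iff₀ hmr] at hpr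
  rw [Real.rpow_neg (hpos r₀ hr₀).le, Real.rpow_sub_one hmr.ne']
  refine le_of_eq_of_le ?_ hpr
  ring

end Gronwall

theorem stmt_10_general {κ r₀ a : ℝ} (hκ : 0 ≤ κ) {m m' f : ℝ → ℝ}
    (hm : IsPrimitiveOn m m' (Ici r₀)) (hm_pos : ∀ r ∈ Ici r₀, 0 < m r)
    (hm'_nonneg : ∀ᵐ r ∂volume.restrict (Ioi r₀), 0 ≤ m' r)
    (hprod_loc : ∀ R, r₀ ≤ R → IntegrableOn (fun z ↦ f z * (m' z / m z)) (Ioc r₀ R))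
    (hf_ineq : ∀ᵐ r ∂volume.restrict (Ici r₀),
      κ * (a + ∫ z in Ioc r₀ r, f z * (m' z / m z)) ≤ f r) :
    (∀ᵐ r ∂volume.restrict (Ici r₀), κ * a * (m r / m r₀) ^ κ ≤ f r) ∧
    (∀ d : ℝ, 1 ≤ d → ∀ mm mm' p : ℝ → ℝ,
      IsPrimitiveOn mm mm' (Ioi 0) →
      (∀ r, 0 < r → 0 < mm r) →
      (∀ᵐ r ∂volume.restrict (Ioi 0), 0 ≤ mm' r) →
      (∀ R, 0 < R → IntegrableOn (fun z ↦ p z * mm' z) (Ioc 0 R)) →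
      (∀ᵐ r ∂volume.restrict (Ioi 0),
        (1 - 1 / d) * ∫ z in Ioc 0 r, p z * mm' z ≤ p r * mm r) →
      ∀ r₁, 0 < r₁ → ∀ᵐ r ∂volume.restrict (Ici r₁),
        (1 - 1 / d) * (∫ z in Ioc 0 r₁, p z * mm' z) * mm r₁ ^ (1 / d - 1) * mm r ^ (-1 / d)
          ≤ p r) := by
  refine ⟨ae_mul_rpow_le_of_ae_mul_add_integral_le hκ hm hm_pos hm'_nonneg hprod_loc hf_ineq, ?_⟩
  intro d hd mm mm' p hmm hmm_pos hmm' hint hGMC r₁ hr₁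
  have hd_nonneg : 0 ≤ 1 - 1 / d := sub_nonneg.2 (div_le_one_of_le₀ hd (zero_le_one.trans hd))
  have hexp₁ : 1 / d - 1 = -(1 - 1 / d) := by ring
  have hexp₂ : -1 / d = 1 - 1 / d - 1 := by ring
  rw [hexp₁, hexp₂]
  exact ae_mul_rpow_le_of_generalizedMcCann hd_nonneg hmm hmm_pos hmm' hint hGMC hr₁

/-- A Gronwall-type lower bound and its application: if `f ≥ 0` satisfies
`f(r) ≥ κ·(a + ∫_{r₀}^r f·(m'/m))` a.e. on `[r₀,∞)` for a nondecreasing,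
locally absolutely continuous, positive `m`, then
`f(r) ≥ κ·a·(m(r)/m(r₀))^κ` a.e.  In particular, for `d > 1`, a concave
nondecreasing mobility `mm` and a pressure density `p ≥ 0` satisfying the
generalized McCann condition `p(r)·mm(r) ≥ (1 − 1/d)·∫₀^r p·mm'` a.e., one has
`p(r) ≥ c₀·mm(r)^{-1/d}` a.e. on `[r₁,∞)` for every `r₁ > 0`, with
`c₀ = (1 − 1/d)·H(r₁)·mm(r₁)^{1/d − 1}`. -/
theorem stmt_10 (κ r₀ a : ℝ) (hκ0 : 0 < κ) (hκ1 : κ < 1) (hr₀ : 0 < r₀)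
    (ha : 0 ≤ a) (m m' f : ℝ → ℝ)
    (hm_mono : MonotoneOn m (Ici r₀)) (hm_pos : ∀ r ∈ Ici r₀, 0 < m r)
    (hm'_nonneg : ∀ᵐ r ∂(volume.restrict (Ioi r₀)), 0 ≤ m' r)
    (hm'_loc : ∀ R : ℝ, r₀ ≤ R → IntegrableOn m' (Ioc r₀ R))
    (hm_rep : ∀ r : ℝ, r₀ ≤ r → m r = m r₀ + ∫ z in Ioc r₀ r, m' z)
    (hf_nonneg : ∀ r : ℝ, r₀ ≤ r → 0 ≤ f r)
    (hf_loc : ∀ R : ℝ, r₀ ≤ R → IntegrableOn f (Ioc r₀ R))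
    (hprod_loc : ∀ R : ℝ, r₀ ≤ R →
      IntegrableOn (fun z => f z * (m' z / m z)) (Ioc r₀ R))
    (hf_ineq : ∀ᵐ r ∂(volume.restrict (Ici r₀)),
      f r ≥ κ * (a + ∫ z in Ioc r₀ r, f z * (m' z / m z))) :
    (∀ᵐ r ∂(volume.restrict (Ici r₀)),
      f r ≥ κ * a * (m r / m r₀) ^ κ) ∧
    (∀ d : ℕ, 1 < d → ∀ mm mm' p : ℝ → ℝ,
      ContinuousOn mm (Ici 0) → ConcaveOn ℝ (Ici 0) mm →
      (∀ r : ℝ, 0 < r → 0 < mm r) → MonotoneOn mm (Ici 0) →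
      (∀ᵐ r ∂(volume.restrict (Ioi (0:ℝ))),
        HasDerivAt mm (mm' r) r ∧ 0 ≤ mm' r) →
      (∀ᵐ r ∂(volume.restrict (Ioi (0:ℝ))), 0 ≤ p r) →
      (∀ R : ℝ, 0 < R → IntegrableOn (fun z => p z * mm' z) (Ioc 0 R)) →
      (∀ᵐ r ∂(volume.restrict (Ioi (0:ℝ))),
        p r * mm r ≥ (1 - 1 / (d : ℝ)) * ∫ z in Ioc 0 r, p z * mm' z) →
      ∀ r₁ : ℝ, 0 < r₁ →
        ∀ᵐ r ∂(volume.restrict (Ici r₁)),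
          p r ≥ ((1 - 1 / (d : ℝ)) * (∫ z in Ioc 0 r₁, p z * mm' z) *
            mm r₁ ^ ((1:ℝ) / d - 1)) * mm r ^ (-(1:ℝ) / d)) := by
  have ⟨hGronwall, hPressure⟩ := stmt_10_general hκ0.le (.of_Ici hm'_loc hm_rep) hm_pos hm'_nonneg
    hprod_loc hf_ineq
  exact ⟨hGronwall, fun d hd mm mm' p _ hconc hpos _ hder _ hint hGMC r₁ hr₁ ↦
    hPressure d (mod_cast hd.le) mm mm' p
      (.of_concaveOn isOpen_Ioi (hconc.subset Ioi_subset_Ici_self (convex_Ioi 0))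
        (hder.mono fun _ h ↦ h.1))
      hpos (hder.mono fun _ h ↦ h.2) hint hGMC r₁ hr₁⟩
end

section
/- Let (X, W) be a metric space, V : X → (−∞, +∞] a proper lower semicontinuous functional with domain D(V) = {x : V(x) < ∞}, and let S be a contraction gradient flow of V on (X, W). Let δ ≥ 0, L ≥ 0, and let u : [0,1] → X be a curve with u₀, u₁ ∈ D(V), W(u_r, u_s) ≤ L·|r − s| for all r, s ∈ [0,1], and L² ≤ W²(u₀, u₁) + δ². Then for every s ∈ [0,1] and every t > 0: V(S_t(u_s)) ≤ (1 − s)·V(u₀) + s·V(u₁) + (s(1 − s)/(2t))·δ². -/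
open Set Filter

/-- A contraction gradient flow of the functional `V` on the metric space `X`:
a semigroup of continuous maps `S t`, continuous at `t = 0`, satisfying the
evolution variational inequality
`½ dist(S t u, v)² − ½ dist(u,v)² ≤ t (V v − V (S t u))` for all `t > 0`,
`u ∈ X`, `v ∈ D(V)` (written here in the equivalent rearranged form to avoid
subtraction of extended reals). -/
def IsContractionGradientFlow {X : Type*} [MetricSpace X]
    (S : ℝ → X → X) (V : X → EReal) : Prop :=
  (∀ t : ℝ, 0 ≤ t → Continuous (S t)) ∧
  (∀ u : X, S 0 u = u) ∧
  (∀ t h : ℝ, 0 ≤ t → 0 ≤ h → ∀ u : X, S (t + h) u = S h (S t u)) ∧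
  (∀ u : X, Tendsto (fun t => S t u) (nhdsWithin 0 (Ioi 0)) (nhds u)) ∧
  (∀ t : ℝ, 0 < t → ∀ u v : X, V v ≠ ⊤ →
    ((1 / 2 * dist (S t u) v ^ 2 : ℝ) : EReal) + (t : EReal) * V (S t u) ≤
      ((1 / 2 * dist u v ^ 2 : ℝ) : EReal) + (t : EReal) * V v)

/-!
Testing the evolution variational inequality for `y = S t x` against `p` and `q` bounds `V y` by
`V p` and `V q` up to differences of squared distances. In the convex combination of the two bounds
with weights `1 - s` and `s`, the distances from `y` contribute at most `- s (1 - s) dist p q ^ 2`,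
by the triangle inequality. If `x` is the point `u s` of the curve, the distances from `x`
contribute at most `s (1 - s) L ^ 2`, so what is left is at most `s (1 - s) δ ^ 2`.
All these contributions are divided by `2 t`.
-/

/-- The evolution variational inequality for `V` between a point `x` and its evolution `y` after
time `t`, tested against the single point `v`. The terms are arranged so that no extended reals are
subtracted. -/
def EVIAt {X : Type*} [PseudoMetricSpace X] (V : X → EReal) (t : ℝ) (x y v : X) : Prop :=
  ((1 / 2 * dist y v ^ 2 : ℝ) : EReal) + (t : EReal) * V y ≤
    ((1 / 2 * dist x v ^ 2 : ℝ) : EReal) + (t : EReal) * V v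

theorem IsContractionGradientFlow.eviAt {X : Type*} [MetricSpace X] {S : ℝ → X → X}
    {V : X → EReal} (hS : IsContractionGradientFlow S V) {t : ℝ} (ht : 0 < t) (x : X) {v : X}
    (hv : V v ≠ ⊤) : EVIAt V t x (S t x) v :=
  hS.2.2.2.2 t ht x v hv

section PseudoMetricSpace

variable {X : Type*} [PseudoMetricSpace X]

theorem mul_one_sub_mul_dist_sq_le {s : ℝ} (hs : s ∈ Icc (0 : ℝ) 1) (p q y : X) :
    s * (1 - s) * dist p q ^ 2 ≤ (1 - s) * dist y p ^ 2 + s * dist y q ^ 2 := by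
  have hs' : 0 ≤ s * (1 - s) := mul_nonneg hs.1 (sub_nonneg.2 hs.2)
  calc
    s * (1 - s) * dist p q ^ 2 ≤ s * (1 - s) * (dist y p + dist y q) ^ 2 := by
      gcongr
      exact dist_triangle_left p q y
    _ = (1 - s) * dist y p ^ 2 + s * dist y q ^ 2
          - ((1 - s) * dist y p - s * dist y q) ^ 2 := by ring
    _ ≤ (1 - s) * dist y p ^ 2 + s * dist y q ^ 2 := sub_le_self _ (sq_nonneg _)

variable {V : X → EReal} {t s a b : ℝ} {x y p q : X}

theorem EVIAt.le_add_of_le (h : EVIAt V t x y p) (ht : 0 < t) (ha : V p ≤ a) :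
    V y ≤ ((a + (dist x p ^ 2 - dist y p ^ 2) / (2 * t) : ℝ) : EReal) := by
  have hya : ((1 / 2 * dist y p ^ 2 : ℝ) : EReal) + (t : EReal) * V y ≤
      ((1 / 2 * dist x p ^ 2 + t * a : ℝ) : EReal) := by
    push_cast
    exact h.trans (add_le_add_right
      (mul_le_mul_of_nonneg_left ha (EReal.coe_nonneg.2 ht.le)) _)
  generalize V y = w at hya ⊢
  induction w with
  | bot => exact bot_le
  | top =>
    rw [EReal.coe_mul_top_of_pos ht, EReal.coe_add_top, top_le_iff] at hya
    exact absurd hya (EReal.coe_ne_top _)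
  | coe w =>
    norm_cast at hya ⊢
    rw [← sub_le_iff_le_add', le_div_iff₀ (by positivity)]
    linarith

theorem EVIAt.le_convex_combination (hp : EVIAt V t x y p) (hq : EVIAt V t x y q) (ht : 0 < t)
    (hs : s ∈ Icc (0 : ℝ) 1) (ha : V p ≤ a) (hb : V q ≤ b) :
    V y ≤ (((1 - s) * a + s * b + ((1 - s) * dist x p ^ 2 + s * dist x q ^ 2
      - s * (1 - s) * dist p q ^ 2) / (2 * t) : ℝ) : EReal) := by
  set A := a + (dist x p ^ 2 - dist y p ^ 2) / (2 * t) with hA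
  set B := b + (dist x q ^ 2 - dist y q ^ 2) / (2 * t) with hB
  have hmin : V y ≤ ((min A B : ℝ) : EReal) := by
    rw [EReal.coe_strictMono.monotone.map_min]
    exact le_min (hp.le_add_of_le ht ha) (hq.le_add_of_le ht hb)
  refine hmin.trans (EReal.coe_le_coe_iff.2 ?_)
  calc
    min A B ≤ (1 - s) * A + s * B :=
      Convex.min_le_combo A B (sub_nonneg.2 hs.2) hs.1 (sub_add_cancel 1 s)
    _ = (1 - s) * a + s * b + ((1 - s) * dist x p ^ 2 + s * dist x q ^ 2
          - ((1 - s) * dist y p ^ 2 + s * dist y q ^ 2)) / (2 * t) := by rw [hA, hB]; ring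
    _ ≤ _ := by
      gcongr
      exact mul_one_sub_mul_dist_sq_le hs p q y

theorem stmt_12_general {δ L : ℝ} (hp : EVIAt V t x y p) (hq : EVIAt V t x y q) (ht : 0 < t)
    (hs : s ∈ Icc (0 : ℝ) 1) (ha : V p ≤ a) (hb : V q ≤ b)
    (hxp : dist x p ≤ L * s) (hxq : dist x q ≤ L * (1 - s))
    (hL : L ^ 2 ≤ dist p q ^ 2 + δ ^ 2) :
    V y ≤ (((1 - s) * a + s * b + s * (1 - s) / (2 * t) * δ ^ 2 : ℝ) : EReal) := by
  have hs₀ : 0 ≤ s := hs.1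
  have hs₁ : 0 ≤ 1 - s := sub_nonneg.2 hs.2
  have hdist : (1 - s) * dist x p ^ 2 + s * dist x q ^ 2 - s * (1 - s) * dist p q ^ 2 ≤
      s * (1 - s) * δ ^ 2 :=
    calc
      _ ≤ (1 - s) * (L * s) ^ 2 + s * (L * (1 - s)) ^ 2 - s * (1 - s) * dist p q ^ 2 := by gcongr
      _ = s * (1 - s) * (L ^ 2 - dist p q ^ 2) := by ring
      _ ≤ s * (1 - s) * δ ^ 2 := by
        gcongr
        exact sub_le_iff_le_add'.2 hL
  refine (hp.le_convex_combination hq ht hs ha hb).trans (EReal.coe_le_coe_iff.2 ?_)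
  rw [div_mul_eq_mul_div]
  gcongr

end PseudoMetricSpace

/-- Approximated convexity along almost-geodesics (Daneri–Savaré): if `S` is a
contraction gradient flow of `V` and `u : [0,1] → X` is an `L`-Lipschitz curve
with endpoints in `D(V)` and `L² ≤ dist(u₀,u₁)² + δ²`, then for all `s ∈ [0,1]`
and `t > 0`, `V(S t (u s)) ≤ (1−s)V(u₀) + sV(u₁) + s(1−s)δ²/(2t)`. -/
theorem stmt_12 {X : Type*} [MetricSpace X] (V : X → EReal)
    (hV_ne_bot : ∀ x, V x ≠ ⊥) (hV_proper : ∃ x, V x ≠ ⊤)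
    (hV_lsc : LowerSemicontinuous V)
    (S : ℝ → X → X) (hS : IsContractionGradientFlow S V)
    (δ L : ℝ) (hδ : 0 ≤ δ) (hL : 0 ≤ L)
    (u : ℝ → X) (hu0 : V (u 0) ≠ ⊤) (hu1 : V (u 1) ≠ ⊤)
    (hLip : ∀ r ∈ Icc (0:ℝ) 1, ∀ s ∈ Icc (0:ℝ) 1, dist (u r) (u s) ≤ L * |r - s|)
    (hL2 : L ^ 2 ≤ dist (u 0) (u 1) ^ 2 + δ ^ 2) :
    ∀ s ∈ Icc (0:ℝ) 1, ∀ t : ℝ, 0 < t →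
      V (S t (u s)) ≤
        (((1 - s) * (V (u 0)).toReal + s * (V (u 1)).toReal +
          s * (1 - s) / (2 * t) * δ ^ 2 : ℝ) : EReal) := by
  intro s hs t ht
  have hxp : dist (u s) (u 0) ≤ L * s := by
    simpa only [sub_zero, abs_of_nonneg hs.1] using hLip s hs 0 (left_mem_Icc.2 zero_le_one)
  have hxq : dist (u s) (u 1) ≤ L * (1 - s) := by
    simpa only [abs_sub_comm s 1, abs_of_nonneg (sub_nonneg.2 hs.2)] using
      hLip s hs 1 (right_mem_Icc.2 zero_le_one)
  exact stmt_12_general (hS.eviAt ht (u s) hu0) (hS.eviAt ht (u s) hu1) ht hs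
    (EReal.le_coe_toReal hu0) (EReal.le_coe_toReal hu1) hxp hxq hL2
end

section
/- Let (X, W) be a metric space, V : X → (−∞, +∞] a proper lower semicontinuous functional with domain D(V) = {x : V(x) < ∞}, and let S be a contraction gradient flow of V on (X, W). Let u : [0,1] → X be a constant-speed minimizing geodesic with endpoints u₀, u₁ ∈ D(V), i.e. W(u_r, u_s) = |r − s|·W(u₀, u₁) for all r, s ∈ [0,1]. Then V(u_s) ≤ (1 − s)·V(u₀) + s·V(u₁) for every s ∈ [0,1]; in particular V is convex along this geodesic. -/
open Set Filter

/-!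
Let `x` lie at fraction `s` along a geodesic from `x₀` to `x₁`, and let `γ` be the flow started at
`x`. Weight the evolution variational inequalities towards `x₀` and `x₁` by `1 - s` and `s`. The
squared distances from `x` contribute `s * (1 - s) * dist x₀ x₁ ^ 2` up to a factor `1 / 2`; among
all points of `X` this contribution is minimal, so the distance terms can be dropped. Hence
`V (γ t)` lies below the chord for every `t > 0`, and lower semicontinuity carries the bound to
`x` as `t → 0`.
-/

open Topology

theorem mul_dist_sq_le_weighted_dist_sq {X : Type*} [PseudoMetricSpace X] {s : ℝ}
    (hs : s ∈ Icc (0 : ℝ) 1) (x y z : X) :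
    s * (1 - s) * dist y z ^ 2 ≤ (1 - s) * dist x y ^ 2 + s * dist x z ^ 2 := by
  have weight_nonneg : 0 ≤ s * (1 - s) := mul_nonneg hs.1 (sub_nonneg.2 hs.2)
  calc s * (1 - s) * dist y z ^ 2
      ≤ s * (1 - s) * (dist x y + dist x z) ^ 2 := by gcongr; exact dist_triangle_left y z x
    _ = (1 - s) * dist x y ^ 2 + s * dist x z ^ 2
          - ((1 - s) * dist x y - s * dist x z) ^ 2 := by ring
    _ ≤ (1 - s) * dist x y ^ 2 + s * dist x z ^ 2 := sub_le_self _ (sq_nonneg _)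

theorem weighted_dist_sq_le_of_dist_le {X : Type*} [PseudoMetricSpace X] {s : ℝ}
    (hs : s ∈ Icc (0 : ℝ) 1) {x x₀ x₁ : X} (h₀ : dist x x₀ ≤ s * dist x₀ x₁)
    (h₁ : dist x x₁ ≤ (1 - s) * dist x₀ x₁) (y : X) :
    (1 - s) * dist x x₀ ^ 2 + s * dist x x₁ ^ 2 ≤
      (1 - s) * dist y x₀ ^ 2 + s * dist y x₁ ^ 2 := by
  obtain ⟨hs_nonneg, hs_le_one⟩ := hs
  calc (1 - s) * dist x x₀ ^ 2 + s * dist x x₁ ^ 2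
      ≤ (1 - s) * (s * dist x₀ x₁) ^ 2 + s * ((1 - s) * dist x₀ x₁) ^ 2 := by gcongr
    _ = s * (1 - s) * dist x₀ x₁ ^ 2 := by ring
    _ ≤ (1 - s) * dist y x₀ ^ 2 + s * dist y x₁ ^ 2 :=
        mul_dist_sq_le_weighted_dist_sq ⟨hs_nonneg, hs_le_one⟩ y x₀ x₁

theorem le_coe_sub_div_of_coe_add_coe_mul_le {p q t : ℝ} (ht : 0 < t) {c : EReal}
    (h : (p : EReal) + t * c ≤ q) : c ≤ (((q - p) / t : ℝ) : EReal) := by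
  rw [EReal.coe_div, EReal.le_div_iff_mul_le (EReal.coe_pos.2 ht) (EReal.coe_ne_top t),
    EReal.coe_sub, EReal.le_sub_iff_add_le (.inl (EReal.coe_ne_bot p)) (.inl (EReal.coe_ne_top p)),
    mul_comm, add_comm]
  exact h

/-- `γ` is a curve issuing from `x` along which the functional `V` satisfies the evolution
variational inequality, integrated from time `0` to time `t`. As in `IsContractionGradientFlow`,
the inequality is arranged so that no extended reals are subtracted. -/
def IsEVICurve {X : Type*} [PseudoMetricSpace X] (V : X → EReal) (x : X) (γ : ℝ → X) : Prop :=
  Tendsto γ (𝓝[>] 0) (𝓝 x) ∧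
  ∀ t : ℝ, 0 < t → ∀ v : X, V v ≠ ⊤ →
    ((1 / 2 * dist (γ t) v ^ 2 : ℝ) : EReal) + t * V (γ t) ≤
      ((1 / 2 * dist x v ^ 2 : ℝ) : EReal) + t * V v

theorem IsContractionGradientFlow.isEVICurve {X : Type*} [MetricSpace X] {S : ℝ → X → X}
    {V : X → EReal} (hS : IsContractionGradientFlow S V) (x : X) :
    IsEVICurve V x (fun t => S t x) :=
  let ⟨_, _, _, tendsto_zero, evi⟩ := hS
  ⟨tendsto_zero x, fun t ht v hv => evi t ht x v hv⟩

section EVICurve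

variable {X : Type*} [PseudoMetricSpace X] {V : X → EReal} {x : X} {γ : ℝ → X}

theorem IsEVICurve.apply_le_add_div (hγ : IsEVICurve V x γ) {t : ℝ} (ht : 0 < t) {v : X} {a : ℝ}
    (ha : V v ≤ a) :
    V (γ t) ≤ ((a + (dist x v ^ 2 - dist (γ t) v ^ 2) / (2 * t) : ℝ) : EReal) := by
  have evi : ((1 / 2 * dist (γ t) v ^ 2 : ℝ) : EReal) + t * V (γ t) ≤
      ((1 / 2 * dist x v ^ 2 + t * a : ℝ) : EReal) :=
    calc ((1 / 2 * dist (γ t) v ^ 2 : ℝ) : EReal) + t * V (γ t)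
        ≤ ((1 / 2 * dist x v ^ 2 : ℝ) : EReal) + t * V v :=
          hγ.2 t ht v (ha.trans_lt (EReal.coe_lt_top a)).ne
      _ ≤ ((1 / 2 * dist x v ^ 2 : ℝ) : EReal) + t * a := by gcongr
      _ = ((1 / 2 * dist x v ^ 2 + t * a : ℝ) : EReal) := by push_cast; rfl
  convert le_coe_sub_div_of_coe_add_coe_mul_le ht evi using 2
  field_simp
  ring

theorem IsEVICurve.apply_le_chord (hγ : IsEVICurve V x γ) {s : ℝ} (hs : s ∈ Icc (0 : ℝ) 1)
    {x₀ x₁ : X} (h₀ : dist x x₀ ≤ s * dist x₀ x₁) (h₁ : dist x x₁ ≤ (1 - s) * dist x₀ x₁)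
    {a₀ a₁ : ℝ} (ha₀ : V x₀ ≤ a₀) (ha₁ : V x₁ ≤ a₁) {t : ℝ} (ht : 0 < t) :
    V (γ t) ≤ (((1 - s) * a₀ + s * a₁ : ℝ) : EReal) := by
  set r₀ : ℝ := a₀ + (dist x x₀ ^ 2 - dist (γ t) x₀ ^ 2) / (2 * t)
  set r₁ : ℝ := a₁ + (dist x x₁ ^ 2 - dist (γ t) x₁ ^ 2) / (2 * t)
  have apply_le_min : V (γ t) ≤ ((min r₀ r₁ : ℝ) : EReal) := by
    rw [EReal.coe_strictMono.monotone.map_min]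
    exact le_min (hγ.apply_le_add_div ht ha₀) (hγ.apply_le_add_div ht ha₁)
  refine apply_le_min.trans (EReal.coe_le_coe_iff.2 ?_)
  calc min r₀ r₁ ≤ (1 - s) * r₀ + s * r₁ :=
        Convex.min_le_combo r₀ r₁ (sub_nonneg.2 hs.2) hs.1 (sub_add_cancel 1 s)
    _ = (1 - s) * a₀ + s * a₁ + ((1 - s) * dist x x₀ ^ 2 + s * dist x x₁ ^ 2 -
          ((1 - s) * dist (γ t) x₀ ^ 2 + s * dist (γ t) x₁ ^ 2)) / (2 * t) := by
        simp only [r₀, r₁]; ring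
    _ ≤ (1 - s) * a₀ + s * a₁ :=
        add_le_of_nonpos_right
          (div_nonpos_of_nonpos_of_nonneg
            (sub_nonpos.2 (weighted_dist_sq_le_of_dist_le hs h₀ h₁ (γ t))) (by positivity))

/-- Real upper bounds `a₀`, `a₁` stand in for the endpoint values because `EReal.toReal ⊥ = 0`. -/
theorem stmt_13_general (hV : LowerSemicontinuousAt V x) (hγ : IsEVICurve V x γ) {s : ℝ}
    (hs : s ∈ Icc (0 : ℝ) 1) {x₀ x₁ : X} (h₀ : dist x x₀ ≤ s * dist x₀ x₁)
    (h₁ : dist x x₁ ≤ (1 - s) * dist x₀ x₁) {a₀ a₁ : ℝ} (ha₀ : V x₀ ≤ a₀) (ha₁ : V x₁ ≤ a₁) :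
    V x ≤ (((1 - s) * a₀ + s * a₁ : ℝ) : EReal) := by
  refine le_of_forall_lt fun c hc => ?_
  obtain ⟨t, c_lt, ht⟩ := ((hγ.1.eventually (hV c hc)).and self_mem_nhdsWithin).exists
  exact c_lt.trans_le (hγ.apply_le_chord hs h₀ h₁ ha₀ ha₁ ht)

end EVICurve

/-- Convexity of `V` along constant-speed minimizing geodesics whose endpoints
lie in `D(V)`, whenever `V` admits a contraction gradient flow:
`V(u_s) ≤ (1−s)V(u₀) + sV(u₁)` for every `s ∈ [0,1]`. -/
theorem stmt_13 {X : Type*} [MetricSpace X] (V : X → EReal)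
    (hV_ne_bot : ∀ x, V x ≠ ⊥) (hV_proper : ∃ x, V x ≠ ⊤)
    (hV_lsc : LowerSemicontinuous V)
    (S : ℝ → X → X) (hS : IsContractionGradientFlow S V)
    (u : ℝ → X) (hu0 : V (u 0) ≠ ⊤) (hu1 : V (u 1) ≠ ⊤)
    (hgeo : ∀ r ∈ Icc (0:ℝ) 1, ∀ s ∈ Icc (0:ℝ) 1,
      dist (u r) (u s) = |r - s| * dist (u 0) (u 1)) :
    ∀ s ∈ Icc (0:ℝ) 1,
      V (u s) ≤ (((1 - s) * (V (u 0)).toReal + s * (V (u 1)).toReal : ℝ) : EReal) := by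
  intro s hs
  have h₀ : dist (u s) (u 0) ≤ s * dist (u 0) (u 1) := by
    rw [hgeo s hs 0 (by simp), sub_zero, abs_of_nonneg hs.1]
  have h₁ : dist (u s) (u 1) ≤ (1 - s) * dist (u 0) (u 1) := by
    rw [hgeo s hs 1 (by simp), abs_sub_comm, abs_of_nonneg (sub_nonneg.2 hs.2)]
  exact stmt_13_general (hV_lsc (u s)) (hS.isEVICurve (u s)) hs h₀ h₁
    (EReal.le_coe_toReal hu0) (EReal.le_coe_toReal hu1)
end

section
/- Let Ω ⊂ ℝ^d be a bounded open set with Lebesgue measure ω := Leb(Ω) > 0. Let P : [0,∞) → [0,∞) be continuous and nondecreasing with P(0) = 0, let ρ : Ω → [0,∞) be Lebesgue-integrable with ∫_Ω ρ dx = 𝔪 > 0, and suppose g := P∘ρ is Lebesgue-integrable on Ω with mean value ḡ := ω^{−1}·∫_Ω g dx. Then ḡ ≤ 2·P(2𝔪/ω) + (4/ω)·∫_Ω |g − ḡ| dx; equivalently, ∫_Ω P(ρ(x)) dx ≤ 2ω·P(2𝔪/ω) + 4·∫_Ω |P(ρ(x)) − ḡ| dx. -/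
open Set MeasureTheory

/-!
By Markov's inequality `ρ` stays below `t` times its mean `ρ̄` on a set of measure at least
`(1 - t⁻¹) ω`. On that set `P ∘ ρ ≤ P (t ρ̄)` by monotonicity, so a constant `c` lying above
`P (t ρ̄)` is at distance at least `c - P (t ρ̄)` from `P ∘ ρ` there, and the integral of
`|P ∘ ρ - c|` controls `(1 - t⁻¹) ω (c - P (t ρ̄))`. For `t = 2` and `c = ḡ`
this yields the bound, with constants `1` and `2` in place of `2` and `4`.
-/

section

variable {α : Type*} [MeasurableSpace α] {μ : Measure α}

theorem measureReal_mul_average_lt_le_inv_mul [IsFiniteMeasure μ] {ρ : α → ℝ}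
    (hρ_nonneg : 0 ≤ᵐ[μ] ρ) (hρ : Integrable ρ μ) {t : ℝ} (ht : 0 < t) :
    μ.real {x | t * ⨍ y, ρ y ∂μ < ρ x} ≤ t⁻¹ * μ.real univ := by
  rcases eq_zero_or_neZero μ with rfl | _
  · simp
  have hω : 0 < μ.real univ := measureReal_univ_pos
  rcases (integral_nonneg_of_ae hρ_nonneg).eq_or_lt with hzero | hpos
  · have hρ_zero : ρ =ᵐ[μ] 0 := (integral_eq_zero_iff_of_nonneg_ae hρ_nonneg hρ).1 hzero.symm
    have hnull : μ {x | t * ⨍ y, ρ y ∂μ < ρ x} = 0 := by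
      refine measure_eq_zero_iff_ae_notMem.2 ?_
      filter_upwards [hρ_zero] with x hx
      simp [hx, average_eq, ← hzero]
    rw [measureReal_def, hnull, ENNReal.toReal_zero]
    positivity
  · have havg : 0 < ⨍ y, ρ y ∂μ := by
      rw [average_eq, smul_eq_mul]
      positivity
    calc μ.real {x | t * ⨍ y, ρ y ∂μ < ρ x}
        ≤ μ.real {x | t * ⨍ y, ρ y ∂μ ≤ ρ x} :=
          measureReal_mono (ofPred_subset_ofPred.2 fun _ => le_of_lt)
      _ ≤ (∫ x, ρ x ∂μ) / (t * ⨍ y, ρ y ∂μ) := by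
        rw [le_div_iff₀' (by positivity)]
        exact mul_meas_ge_le_integral_of_nonneg hρ_nonneg hρ _
      _ = t⁻¹ * μ.real univ := by
        rw [← measure_smul_average, smul_eq_mul]
        field_simp

theorem one_sub_inv_mul_le_measureReal_le_mul_average [IsFiniteMeasure μ] {ρ : α → ℝ}
    (hρ_nonneg : 0 ≤ᵐ[μ] ρ) (hρ : Integrable ρ μ) {t : ℝ} (ht : 0 < t) :
    (1 - t⁻¹) * μ.real univ ≤ μ.real {x | ρ x ≤ t * ⨍ y, ρ y ∂μ} := by
  have hcover : {x | ρ x ≤ t * ⨍ y, ρ y ∂μ} ∪ {x | t * ⨍ y, ρ y ∂μ < ρ x} = univ :=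
    eq_univ_of_forall fun x => le_or_gt (ρ x) _
  have hunion := measureReal_union_le (μ := μ)
    {x | ρ x ≤ t * ⨍ y, ρ y ∂μ} {x | t * ⨍ y, ρ y ∂μ < ρ x}
  rw [hcover] at hunion
  linarith [measureReal_mul_average_lt_le_inv_mul hρ_nonneg hρ ht]

theorem sub_mul_measureReal_le_integral_abs_sub [IsFiniteMeasure μ] {g : α → ℝ} {s : Set α}
    {a : ℝ} (hg : Integrable g μ) (hga : ∀ᵐ x ∂μ.restrict s, g x ≤ a) (c : ℝ) :
    (c - a) * μ.real s ≤ ∫ x, |g x - c| ∂μ := by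
  have hosc : Integrable (fun x => |g x - c|) μ := (hg.sub (integrable_const c)).abs
  calc (c - a) * μ.real s
      = ∫ _ in s, (c - a) ∂μ := by rw [setIntegral_const, smul_eq_mul, mul_comm]
    _ ≤ ∫ x in s, |g x - c| ∂μ := by
      refine integral_mono_ae (integrable_const _) hosc.integrableOn ?_
      filter_upwards [hga] with x hx
      rw [abs_sub_comm]
      exact (sub_le_sub_left hx c).trans (le_abs_self _)
    _ ≤ ∫ x, |g x - c| ∂μ := setIntegral_le_integral hosc (ae_of_all _ fun _ => abs_nonneg _)

theorem le_apply_mul_average_add_average_abs_sub [IsFiniteMeasure μ] [NeZero μ] {P : ℝ → ℝ}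
    {ρ : α → ℝ} (hP : MonotoneOn P (Ici 0)) (hρ_nonneg : 0 ≤ᵐ[μ] ρ) (hρ : Integrable ρ μ)
    (hg : Integrable (fun x => P (ρ x)) μ) {t : ℝ} (ht : 1 < t) (c : ℝ) :
    c ≤ P (t * ⨍ x, ρ x ∂μ) + (1 - t⁻¹)⁻¹ * ⨍ x, |P (ρ x) - c| ∂μ := by
  set K := t * ⨍ x, ρ x ∂μ
  have ht_pos : 0 < t := one_pos.trans ht
  have hfrac : 0 < 1 - t⁻¹ := sub_pos.2 (inv_lt_one_of_one_lt₀ ht)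
  have hω : 0 < μ.real univ := measureReal_univ_pos
  have hosc_nonneg : 0 ≤ ⨍ x, |P (ρ x) - c| ∂μ := integral_nonneg fun _ => abs_nonneg _
  have hK_nonneg : 0 ≤ K := mul_nonneg ht_pos.le (integral_nonneg_of_ae
    (Measure.ae_smul_measure hρ_nonneg _))
  rcases le_total c (P K) with hc | hc
  · exact hc.trans (le_add_of_nonneg_right (by positivity))
  have hsub : ∀ᵐ x ∂μ.restrict {x | ρ x ≤ K}, P (ρ x) ≤ P K := by
    have hmem : ∀ᵐ x ∂μ.restrict {x | ρ x ≤ K}, ρ x ≤ K :=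
      ae_restrict_mem₀ (nullMeasurableSet_le hρ.aemeasurable aemeasurable_const)
    filter_upwards [hmem, ae_restrict_of_ae hρ_nonneg] with x hxK hx
    exact hP hx hK_nonneg hxK
  have hmeasure : (1 - t⁻¹) * μ.real univ ≤ μ.real {x | ρ x ≤ K} :=
    one_sub_inv_mul_le_measureReal_le_mul_average hρ_nonneg hρ ht_pos
  have hlevel : (1 - t⁻¹) * μ.real univ * (c - P K) ≤ μ.real univ * ⨍ x, |P (ρ x) - c| ∂μ :=
    calc (1 - t⁻¹) * μ.real univ * (c - P K)
        ≤ μ.real {x | ρ x ≤ K} * (c - P K) :=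
          mul_le_mul_of_nonneg_right hmeasure (sub_nonneg.2 hc)
      _ ≤ ∫ x, |P (ρ x) - c| ∂μ := by
        rw [mul_comm]
        exact sub_mul_measureReal_le_integral_abs_sub hg hsub c
      _ = μ.real univ * ⨍ x, |P (ρ x) - c| ∂μ := by rw [← measure_smul_average, smul_eq_mul]
  rw [← sub_le_iff_le_add', le_inv_mul_iff₀ hfrac]
  exact le_of_mul_le_mul_left (by linarith) hω

theorem stmt_17_general {s : Set α} (hs : 0 < (μ s).toReal) {P : ℝ → ℝ} {ρ : α → ℝ}
    (hP : MonotoneOn P (Ici 0)) (hρ_nonneg : 0 ≤ᵐ[μ.restrict s] ρ) (hρ : IntegrableOn ρ s μ)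
    (hg : IntegrableOn (fun x => P (ρ x)) s μ) :
    (μ s).toReal⁻¹ * ∫ x in s, P (ρ x) ∂μ ≤
      P (2 * (∫ x in s, ρ x ∂μ) / (μ s).toReal) +
        (2 / (μ s).toReal) *
          ∫ x in s, |P (ρ x) - (μ s).toReal⁻¹ * ∫ y in s, P (ρ y) ∂μ| ∂μ := by
  obtain ⟨hs_pos, hs_fin⟩ := ENNReal.toReal_pos_iff.1 hs
  have : IsFiniteMeasure (μ.restrict s) := isFiniteMeasure_restrict.2 hs_fin.ne
  have : NeZero (μ.restrict s) := ⟨Measure.restrict_eq_zero.not.2 hs_pos.ne'⟩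
  have hmean := le_apply_mul_average_add_average_abs_sub hP hρ_nonneg hρ hg one_lt_two
    ((μ s).toReal⁻¹ * ∫ x in s, P (ρ x) ∂μ)
  rw [setAverage_eq, setAverage_eq, smul_eq_mul, smul_eq_mul, measureReal_def] at hmean
  convert hmean using 2 <;> ring_nf

end

/-- Chebyshev-type mean value bound: for a bounded open set `Ω ⊂ ℝᵈ` of
positive measure `ω`, a continuous nondecreasing `P ≥ 0` with `P 0 = 0`, and a
nonnegative integrable density `ρ` on `Ω` of total mass `𝔪 > 0` such that
`g = P ∘ ρ` is integrable with mean `ḡ = ω⁻¹ ∫_Ω g`, one has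
`ḡ ≤ 2 P(2𝔪/ω) + (4/ω) ∫_Ω |g − ḡ|`. -/
theorem stmt_17 (d : ℕ) (Ω : Set (EuclideanSpace ℝ (Fin d)))
    (hΩ_open : IsOpen Ω) (hΩ_bdd : Bornology.IsBounded Ω)
    (hΩ_pos : 0 < (volume Ω).toReal)
    (P : ℝ → ℝ) (hP_cont : ContinuousOn P (Ici 0))
    (hP_mono : MonotoneOn P (Ici 0)) (hP0 : P 0 = 0)
    (hP_nonneg : ∀ r : ℝ, 0 ≤ r → 0 ≤ P r)
    (ρ : EuclideanSpace ℝ (Fin d) → ℝ) (hρ_nonneg : ∀ x ∈ Ω, 0 ≤ ρ x)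
    (hρ_int : IntegrableOn ρ Ω)
    (𝔪 : ℝ) (h𝔪 : ∫ x in Ω, ρ x = 𝔪) (h𝔪_pos : 0 < 𝔪)
    (hg_int : IntegrableOn (fun x => P (ρ x)) Ω) :
    (volume Ω).toReal⁻¹ * ∫ x in Ω, P (ρ x) ≤
      2 * P (2 * 𝔪 / (volume Ω).toReal) +
        (4 / (volume Ω).toReal) *
          ∫ x in Ω, |P (ρ x) - (volume Ω).toReal⁻¹ * ∫ y in Ω, P (ρ y)| := by
  subst h𝔪
  have hP_pos := hP_nonneg (2 * (∫ x in Ω, ρ x) / (volume Ω).toReal) (by positivity)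
  have hbound := stmt_17_general hΩ_pos hP_mono
    (ae_restrict_of_forall_mem hΩ_open.measurableSet hρ_nonneg) hρ_int hg_int
  exact hbound.trans (by gcongr <;> linarith)
end

section
/- Let φ : ℝ × ℝ^d → [0, +∞] be convex and lower semicontinuous, let k : ℝ^d → [0,∞) be a continuous nonnegative function with compact support and ∫_{ℝ^d} k(y) dy = 1, and let ρ ∈ L¹(ℝ^d; [0,∞)) and w ∈ L¹(ℝ^d; ℝ^d). Then ∫_{ℝ^d} φ( (ρ ∗ k)(x), (w ∗ k)(x) ) dx ≤ ∫_{ℝ^d} φ( ρ(x), w(x) ) dx, where ∗ denotes convolution (applied componentwise to w). -/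
open Set MeasureTheory ENNReal

/-!
A probability measure `P` on a group acts on integrable functions by `f ↦ ∫ y, f (· - y) ∂P`.
Pointwise, Jensen's inequality bounds `φ (∫ y, f (x - y) ∂P)` by `∫⁻ y, φ (f (x - y)) ∂P`;
integrating in `x`, Tonelli and the translation invariance of the reference measure turn the
right-hand side into `∫⁻ x, φ (f x)`. A mollifier `k` is the case where `P` has density `k`.

Jensen's inequality for `φ` with values in `[0, ∞]` says that the barycentre of the points
`(f x, φ (f x))` stays in the epigraph of `φ`, a closed convex set.
-/

open scoped NNReal

section Epigraph

variable {E : Type*}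

/-- The epigraph of an extended-nonnegative function, as a subset of `E × ℝ` rather than
`E × ℝ≥0∞`, so that integrals in `E × ℝ` can be tested for membership. The condition `0 ≤ z.2` is
needed because `ENNReal.ofReal` sends negative numbers to `0`. -/
def realEpigraph (φ : E → ℝ≥0∞) : Set (E × ℝ) :=
  {z | 0 ≤ z.2 ∧ φ z.1 ≤ ENNReal.ofReal z.2}

theorem mk_toReal_mem_realEpigraph {φ : E → ℝ≥0∞} {x : E} (hx : φ x ≠ ∞) :
    (x, (φ x).toReal) ∈ realEpigraph φ :=
  ⟨toReal_nonneg, (ofReal_toReal hx).ge⟩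

theorem isClosed_realEpigraph [TopologicalSpace E] {φ : E → ℝ≥0∞}
    (hφ : LowerSemicontinuous φ) : IsClosed (realEpigraph φ) := by
  have h_cont : Continuous fun z : E × ℝ ↦ (z.1, ENNReal.ofReal z.2) :=
    continuous_fst.prodMk (continuous_ofReal.comp continuous_snd)
  exact (isClosed_le continuous_const continuous_snd).inter (hφ.isClosed_epigraph.preimage h_cont)

variable [AddCommMonoid E] [Module ℝ E] {φ : E → ℝ≥0∞}

theorem convexOn_univ_of_forall_ofReal
    (hφ : ∀ p q : E, ∀ a b : ℝ, 0 ≤ a → 0 ≤ b → a + b = 1 →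
      φ (a • p + b • q) ≤ ENNReal.ofReal a * φ p + ENNReal.ofReal b * φ q) :
    ConvexOn ℝ≥0 univ φ := by
  refine ⟨convex_univ, fun p _ q _ a b _ _ hab ↦ ?_⟩
  simpa [NNReal.smul_def, ENNReal.smul_def] using
    hφ p q a b a.coe_nonneg b.coe_nonneg (by exact_mod_cast hab)

theorem convex_realEpigraph (hφ : ConvexOn ℝ≥0 univ φ) : Convex ℝ (realEpigraph φ) := by
  rintro ⟨p, s⟩ ⟨hs : 0 ≤ s, hps : φ p ≤ ENNReal.ofReal s⟩
    ⟨q, t⟩ ⟨ht : 0 ≤ t, hqt : φ q ≤ ENNReal.ofReal t⟩ a b ha hb hab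
  lift a to ℝ≥0 using ha
  lift b to ℝ≥0 using hb
  have hst : 0 ≤ a * s + b * t := by positivity
  refine ⟨hst, ?_⟩
  calc φ (a • p + b • q)
      ≤ a • φ p + b • φ q :=
        hφ.2 (mem_univ p) (mem_univ q) a.2 b.2 (by exact_mod_cast hab)
    _ ≤ a • ENNReal.ofReal s + b • ENNReal.ofReal t := by gcongr
    _ = ENNReal.ofReal (a * s + b * t) := by
        rw [ofReal_add (by positivity) (by positivity), ofReal_mul a.coe_nonneg,
          ofReal_mul b.coe_nonneg]
        simp only [ofReal_coe_nnreal, ENNReal.smul_def, smul_eq_mul]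

end Epigraph

section Jensen

variable {Ω E : Type*} [MeasurableSpace Ω] [NormedAddCommGroup E] [NormedSpace ℝ E]
  [CompleteSpace E]

theorem map_integral_le_lintegral_of_convexOn {P : Measure Ω} [IsProbabilityMeasure P]
    {φ : E → ℝ≥0∞} (hφ_conv : ConvexOn ℝ≥0 univ φ) (hφ_lsc : LowerSemicontinuous φ)
    {f : Ω → E} (hf : Integrable f P) :
    φ (∫ x, f x ∂P) ≤ ∫⁻ x, φ (f x) ∂P := by
  borelize E
  have hφf : AEMeasurable (fun x ↦ φ (f x)) P := hφ_lsc.measurable.comp_aemeasurable hf.aemeasurable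
  by_cases h_top : ∫⁻ x, φ (f x) ∂P = ∞
  · exact h_top ▸ le_top
  have h_fin : ∀ᵐ x ∂P, φ (f x) < ∞ := ae_lt_top' hφf h_top
  have h_int : Integrable (fun x ↦ (φ (f x)).toReal) P :=
    integrable_toReal_of_lintegral_ne_top hφf h_top
  have h_mem : (∫ x, f x ∂P, ∫ x, (φ (f x)).toReal ∂P) ∈ realEpigraph φ := by
    rw [← integral_pair hf h_int]
    exact (convex_realEpigraph hφ_conv).integral_mem (isClosed_realEpigraph hφ_lsc)
      (h_fin.mono fun x hx ↦ mk_toReal_mem_realEpigraph hx.ne) (hf.prodMk h_int)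
  calc φ (∫ x, f x ∂P)
      ≤ ENNReal.ofReal (∫ x, (φ (f x)).toReal ∂P) := h_mem.2
    _ = ∫⁻ x, φ (f x) ∂P := by rw [integral_toReal hφf h_fin, ofReal_toReal h_top]

end Jensen

section Translation

variable {G E : Type*} [AddGroup G] [MeasurableSpace G] [MeasurableAdd₂ G] [MeasurableNeg G]
  [NormedAddCommGroup E] [NormedSpace ℝ E] {μ P : Measure G} [SFinite μ] [μ.IsAddRightInvariant]

theorem ae_integrable_comp_sub [IsFiniteMeasure P] {f : G → E} (hf : Integrable f μ) :
    ∀ᵐ x ∂μ, Integrable (fun y ↦ f (x - y)) P := by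
  simpa [ConvolutionExistsAt] using
    (integrable_const (1 : ℝ) : Integrable _ P).ae_convolution_exists
      (ContinuousLinearMap.lsmul ℝ ℝ) hf

theorem lintegral_lintegral_comp_sub [SFinite P] {g : G → ℝ≥0∞} (hg : AEMeasurable g μ) :
    ∫⁻ x, ∫⁻ y, g (x - y) ∂P ∂μ = (∫⁻ x, g x ∂μ) * P univ := by
  calc ∫⁻ x, ∫⁻ y, g (x - y) ∂P ∂μ
      = ∫⁻ y, ∫⁻ x, g (x - y) ∂μ ∂P := lintegral_lintegral_swap <|
        hg.comp_quasiMeasurePreserving (quasiMeasurePreserving_sub_of_right_invariant μ P)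
    _ = ∫⁻ _, ∫⁻ x, g x ∂μ ∂P := by simp only [lintegral_sub_right_eq_self g]
    _ = (∫⁻ x, g x ∂μ) * P univ := lintegral_const _

theorem lintegral_map_integral_comp_sub_le [CompleteSpace E] [IsProbabilityMeasure P]
    {φ : E → ℝ≥0∞} (hφ_conv : ConvexOn ℝ≥0 univ φ) (hφ_lsc : LowerSemicontinuous φ)
    {f : G → E} (hf : Integrable f μ) :
    ∫⁻ x, φ (∫ y, f (x - y) ∂P) ∂μ ≤ ∫⁻ x, φ (f x) ∂μ := by
  borelize E
  calc ∫⁻ x, φ (∫ y, f (x - y) ∂P) ∂μ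
      ≤ ∫⁻ x, ∫⁻ y, φ (f (x - y)) ∂P ∂μ := lintegral_mono_ae <|
        (ae_integrable_comp_sub hf).mono fun _ hx ↦
          map_integral_le_lintegral_of_convexOn hφ_conv hφ_lsc hx
    _ = (∫⁻ x, φ (f x) ∂μ) * P univ :=
        lintegral_lintegral_comp_sub (hφ_lsc.measurable.comp_aemeasurable hf.aemeasurable)
    _ = ∫⁻ x, φ (f x) ∂μ := by rw [measure_univ, mul_one]

end Translation

section Density

variable {Ω E : Type*} [MeasurableSpace Ω] [NormedAddCommGroup E] [NormedSpace ℝ E]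
  {μ : Measure Ω} {k : Ω → ℝ}

theorem isProbabilityMeasure_withDensity_ofReal (hk_nonneg : 0 ≤ᵐ[μ] k)
    (hk_one : ∫ y, k y ∂μ = 1) :
    IsProbabilityMeasure (μ.withDensity fun y ↦ ENNReal.ofReal (k y)) := by
  have hk_int : Integrable k μ := .of_integral_ne_zero (by simp [hk_one])
  constructor
  rw [withDensity_apply _ .univ, setLIntegral_univ,
    ← ofReal_integral_eq_lintegral_ofReal hk_int hk_nonneg, hk_one, ofReal_one]

theorem integral_withDensity_ofReal (hk_meas : AEMeasurable k μ) (hk_nonneg : 0 ≤ᵐ[μ] k)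
    (g : Ω → E) :
    ∫ y, g y ∂μ.withDensity (fun y ↦ ENNReal.ofReal (k y)) = ∫ y, k y • g y ∂μ := by
  rw [integral_withDensity_eq_integral_toReal_smul₀ hk_meas.ennreal_ofReal (by simp)]
  refine integral_congr_ae (hk_nonneg.mono fun y hy ↦ ?_)
  simp only [toReal_ofReal hy]

end Density

theorem stmt_19_general {G F : Type*} [AddGroup G] [MeasurableSpace G] [MeasurableAdd₂ G]
    [MeasurableNeg G] {μ : Measure G} [SFinite μ] [μ.IsAddRightInvariant]
    [NormedAddCommGroup F] [NormedSpace ℝ F] [CompleteSpace F]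
    {φ : ℝ × F → ℝ≥0∞} (hφ_conv : ConvexOn ℝ≥0 univ φ) (hφ_lsc : LowerSemicontinuous φ)
    {k : G → ℝ} (hk_nonneg : 0 ≤ᵐ[μ] k) (hk_one : ∫ y, k y ∂μ = 1)
    {ρ : G → ℝ} (hρ : Integrable ρ μ) {w : G → F} (hw : Integrable w μ) :
    ∫⁻ x, φ (∫ y, ρ (x - y) * k y ∂μ, ∫ y, k y • w (x - y) ∂μ) ∂μ ≤ ∫⁻ x, φ (ρ x, w x) ∂μ := by
  let P := μ.withDensity fun y ↦ ENNReal.ofReal (k y)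
  have : IsProbabilityMeasure P := isProbabilityMeasure_withDensity_ofReal hk_nonneg hk_one
  have hk_meas : AEMeasurable k μ :=
    (Integrable.of_integral_ne_zero (by simp [hk_one])).aemeasurable
  have h_conv : ∀ᵐ x ∂μ, (∫ y, ρ (x - y) * k y ∂μ, ∫ y, k y • w (x - y) ∂μ) =
      ∫ y, (ρ (x - y), w (x - y)) ∂P := by
    filter_upwards [ae_integrable_comp_sub (P := P) hρ, ae_integrable_comp_sub (P := P) hw]
      with x hρx hwx
    rw [integral_pair hρx hwx, integral_withDensity_ofReal hk_meas hk_nonneg,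
      integral_withDensity_ofReal hk_meas hk_nonneg]
    simp only [smul_eq_mul, mul_comm]
  calc ∫⁻ x, φ (∫ y, ρ (x - y) * k y ∂μ, ∫ y, k y • w (x - y) ∂μ) ∂μ
      = ∫⁻ x, φ (∫ y, (ρ (x - y), w (x - y)) ∂P) ∂μ :=
        lintegral_congr_ae (h_conv.mono fun _ hx ↦ congrArg φ hx)
    _ ≤ ∫⁻ x, φ (ρ x, w x) ∂μ :=
        lintegral_map_integral_comp_sub_le hφ_conv hφ_lsc (hρ.prodMk hw)

/-- Jensen-type inequality for mollification: if `φ : ℝ × ℝᵈ → [0,∞]` is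
jointly convex and lower semicontinuous, `k` is a continuous nonnegative
convolution kernel with compact support and unit integral, `ρ ∈ L¹(ℝᵈ)` is
nonnegative and `w ∈ L¹(ℝᵈ;ℝᵈ)`, then
`∫ φ(ρ∗k, w∗k) dx ≤ ∫ φ(ρ, w) dx`. -/
theorem stmt_19 (d : ℕ)
    (φ : ℝ × EuclideanSpace ℝ (Fin d) → ℝ≥0∞)
    (hφ_conv : ∀ p q : ℝ × EuclideanSpace ℝ (Fin d), ∀ a b : ℝ,
      0 ≤ a → 0 ≤ b → a + b = 1 →
      φ (a • p + b • q) ≤ ENNReal.ofReal a * φ p + ENNReal.ofReal b * φ q)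
    (hφ_lsc : LowerSemicontinuous φ)
    (k : EuclideanSpace ℝ (Fin d) → ℝ) (hk_cont : Continuous k)
    (hk_supp : HasCompactSupport k) (hk_nonneg : ∀ y, 0 ≤ k y)
    (hk_int : ∫ y, k y = 1)
    (ρ : EuclideanSpace ℝ (Fin d) → ℝ) (hρ_int : Integrable ρ)
    (hρ_nonneg : ∀ x, 0 ≤ ρ x)
    (w : EuclideanSpace ℝ (Fin d) → EuclideanSpace ℝ (Fin d))
    (hw_int : Integrable w) :
    ∫⁻ x, φ ((∫ y, ρ (x - y) * k y), (∫ y, k y • w (x - y))) ≤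
      ∫⁻ x, φ (ρ x, w x) :=
  stmt_19_general (convexOn_univ_of_forall_ofReal hφ_conv) hφ_lsc
    (.of_forall hk_nonneg) hk_int hρ_int hw_int
end
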